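/- Let n ≥ 1, p = 1 + 2/n, and T_* ∈ (0,∞). Then there exists ε > 0 with the following property: if φ is a locally integrable function on ℝ^n with |||φ|||_{1,n/2;T^{1/2}} ≤ ε for some T ∈ (0,T_*], then there exists a solution u of the semilinear heat equation ∂_t u − Δu = |u|^{p−1}u on ℝ^n × (0,T) with initial data φ (in the Duhamel integral sense), such that sup_{t∈(0,T)} |||u(t)|||_{1,n/2;T^{1/2}} < ∞ and sup_{t∈(0,T)} t^{n/2} [log(e+1/t)]^{n/2} ‖u(t)‖_{L^∞} < ∞, and u(t) → φ as t → 0+ in the sense of distributions (i.e. ∫ u(x,t)η(x)dx → ∫ φ(x)η(x)dx for every continuous compactly supported η). -/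

import Mathlib

open MeasureTheory Real Set ENNReal

noncomputable def logFac (s : ℝ) : ℝ := Real.log (Real.exp 1 + 1 / s)

noncomputable def zygNorm (n : ℕ) (q α : ℝ)
    (f : EuclideanSpace ℝ (Fin n) → ℝ) : ℝ≥0∞ :=
  ⨆ s : Set.Ioi (0 : ℝ),
    (ENNReal.ofReal (logFac s.1) ^ α *
      ⨆ E : {E : Set (EuclideanSpace ℝ (Fin n)) //
          MeasurableSet E ∧ volume E = ENNReal.ofReal s.1},
        ∫⁻ x in E.1, ENNReal.ofReal (|f x| ^ q)) ^ (1 / q)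

noncomputable def zygNormUL (n : ℕ) (q α ρ : ℝ)
    (f : EuclideanSpace ℝ (Fin n) → ℝ) : ℝ≥0∞ :=
  ⨆ z : EuclideanSpace ℝ (Fin n),
    zygNorm n q α ((Metric.ball z ρ).indicator f)

noncomputable def heatKernel (n : ℕ) (x : EuclideanSpace ℝ (Fin n)) (t : ℝ) : ℝ :=
  (4 * Real.pi * t) ^ (-(n : ℝ) / 2) * Real.exp (-‖x‖ ^ 2 / (4 * t))

/-- `u` is a solution of `∂ₜu − Δu = |u|^{p−1}u` on `ℝ^n × (0,T)` with initial data `φ`,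
in the Duhamel integral sense. -/
def IsSolution (n : ℕ) (p T : ℝ) (φ : EuclideanSpace ℝ (Fin n) → ℝ)
    (u : EuclideanSpace ℝ (Fin n) → ℝ → ℝ) : Prop :=
  Measurable (fun q : EuclideanSpace ℝ (Fin n) × ℝ => u q.1 q.2) ∧
  ∀ᵐ q : EuclideanSpace ℝ (Fin n) × ℝ
      ∂(volume.prod (volume.restrict (Set.Ioo 0 T))),
    Integrable (fun y => heatKernel n (q.1 - y) q.2 * φ y) volume ∧
    Integrable (fun ys : EuclideanSpace ℝ (Fin n) × ℝ =>
        heatKernel n (q.1 - ys.1) (q.2 - ys.2) * (|u ys.1 ys.2| ^ (p - 1) * u ys.1 ys.2))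
      (volume.prod (volume.restrict (Set.Ioo 0 q.2))) ∧
    u q.1 q.2 = (∫ y, heatKernel n (q.1 - y) q.2 * φ y) +
      ∫ s in Set.Ioo 0 q.2, ∫ y,
        heatKernel n (q.1 - y) (q.2 - s) * (|u y s| ^ (p - 1) * u y s)

/-!
The solution is squeezed below a supersolution. For `G = |φ| log(e + |φ|)^β` with `0 < β < n/2`
put `U(t) = S(t)|φ| + log(e + 1/t)^(-β) S(t)G + δ`. Chebyshev's inequality turns the Zygmund bound
on `φ` of order `n/2` into one on `G` of order `n/2 - β`. Splitting `|φ|` at the level `δ t^(-κ)`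
bounds `S(t)|φ|` by a multiple of `log(e + 1/t)^(-β) S(t)G` plus `δ t^(-κ)`, and the smoothing
estimate `S(t)G ≲ ε t^(-n/2) log(e + 1/t)^(-(n/2 - β))` makes `U^p` at time `s`, for the critical
power `p = 1 + 2/n`, at most a small multiple of `s⁻¹ log(e + 1/s)^(-1-β) S(s)G` plus an
integrable power of `s`. Since `S(t - s)S(s)G = S(t)G` and `s⁻¹ log(e + 1/s)^(-1-β)` integrates to
about `log(e + 1/t)^(-β)`, the Duhamel integral of `U^p` stays below the last two terms of `U`
once `δ` and then `ε` are small. As `r ↦ |r|^(p-1) r` is monotone, Picard iteration started from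
`U` decreases to a solution `u` with `|u| ≤ U`, and both norm bounds are read off from `U`. The
Duhamel integral of `U^p` tends to zero locally in `L¹` as `t → 0`, so `u` has the same weak limit
as `S(t)φ`.
-/

open Filter Metric Topology Function

lemma one_le_logFac {s : ℝ} (hs : 0 < s) : 1 ≤ logFac s := by
  rw [logFac, Real.le_log_iff_exp_le (by positivity)]
  exact le_add_of_nonneg_right (by positivity)

lemma logFac_pos {s : ℝ} (hs : 0 < s) : 0 < logFac s :=
  one_pos.trans_le (one_le_logFac hs)

lemma antitoneOn_logFac : AntitoneOn logFac (Ioi 0) := by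
  intro r (hr : 0 < r) s (hs : 0 < s) hrs
  unfold logFac
  gcongr

lemma measurable_logFac : Measurable logFac := by
  unfold logFac
  fun_prop

lemma tendsto_logFac_nhdsGT_zero : Tendsto logFac (𝓝[>] 0) atTop := by
  refine tendsto_log_atTop.comp (tendsto_atTop_add_const_left _ _ ?_)
  exact tendsto_inv_nhdsGT_zero.congr fun s ↦ (one_div s).symm

lemma tendsto_logFac_rpow_neg_nhdsGT_zero {β : ℝ} (hβ : 0 < β) :
    Tendsto (fun s ↦ logFac s ^ (-β)) (𝓝[>] 0) (𝓝 0) :=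
  (tendsto_rpow_neg_atTop hβ).comp tendsto_logFac_nhdsGT_zero

lemma logFac_rpow_neg_monotoneOn {β : ℝ} (hβ : 0 ≤ β) :
    MonotoneOn (fun s ↦ logFac s ^ (-β)) (Ioi 0) := fun _ hr _ hs hrs ↦
  rpow_le_rpow_of_nonpos (logFac_pos hs) (antitoneOn_logFac hr hs hrs) (neg_nonpos.2 hβ)

lemma exp_one_add_one_div_le_mul_rpow {a k s : ℝ} (ha : 0 < a) (hk : 0 < k) (hs : 0 < s) :
    exp 1 + 1 / s ≤ (1 + a ^ (1 / k)) * (exp 1 + 1 / (a * s ^ k)) ^ (1 + 1 / k) := by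
  set X := exp 1 + 1 / (a * s ^ k)
  have hXe : exp 1 ≤ X := le_add_of_nonneg_right (by positivity)
  have hX1 : 1 ≤ X := (one_le_exp zero_le_one).trans hXe
  have h_exp : exp 1 ≤ X ^ (1 + 1 / k) :=
    hXe.trans (self_le_rpow_of_one_le hX1 (by simp [hk.le]))
  have h_inv : 1 / s ≤ a ^ (1 / k) * X ^ (1 + 1 / k) :=
    calc 1 / s = a ^ (1 / k) * (1 / (a * s ^ k)) ^ (1 / k) := by
          rw [div_rpow zero_le_one (by positivity), mul_rpow ha.le (by positivity),
            ← Real.rpow_mul hs.le, mul_one_div_cancel hk.ne', Real.rpow_one, Real.one_rpow]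
          field_simp
      _ ≤ a ^ (1 / k) * X ^ (1 / k) := by
          gcongr
          exact le_add_of_nonneg_left (exp_nonneg 1)
      _ ≤ a ^ (1 / k) * X ^ (1 + 1 / k) := by
          gcongr
          exact le_add_of_nonneg_left zero_le_one
  linarith

lemma exists_mul_logFac_le_logFac_mul_rpow {a k : ℝ} (ha : 0 < a) (hk : 0 < k) :
    ∃ c > 0, ∀ s > 0, c * logFac s ≤ logFac (a * s ^ k) := by
  set D := Real.log (1 + a ^ (1 / k)) with hD
  have hD0 : 0 ≤ D := Real.log_nonneg (le_add_of_nonneg_right (by positivity))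
  refine ⟨(1 + 1 / k + D)⁻¹, by positivity, fun s hs ↦ ?_⟩
  rw [inv_mul_le_iff₀ (by positivity)]
  have h_one : 1 ≤ logFac (a * s ^ k) := one_le_logFac (by positivity)
  have h_log : logFac s ≤ D + (1 + 1 / k) * logFac (a * s ^ k) := by
    rw [logFac, logFac, ← Real.log_rpow (by positivity), hD,
      ← Real.log_mul (by positivity) (by positivity)]
    exact Real.log_le_log (by positivity) (exp_one_add_one_div_le_mul_rpow ha hk hs)
  nlinarith

lemma logFac_le_log_div_add_logFac {r τ : ℝ} (hr : 0 < r) (hrτ : r ≤ τ) :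
    logFac r ≤ Real.log (τ / r) + logFac τ := by
  have hτ : 0 < τ := hr.trans_le hrτ
  rw [logFac, logFac, ← Real.log_mul (by positivity) (by positivity)]
  refine Real.log_le_log (by positivity) ?_
  calc exp 1 + 1 / r ≤ τ / r * exp 1 + 1 / r := by
        gcongr
        exact le_mul_of_one_le_left (exp_nonneg 1) ((one_le_div hr).2 hrτ)
    _ = τ / r * (exp 1 + 1 / τ) := by field_simp

lemma one_add_log_le_mul_rpow {N q : ℝ} (hN : 1 ≤ N) (hq : 0 < q) :
    1 + Real.log q ≤ N * q ^ (1 / N) := by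
  have h := Real.log_le_sub_one_of_pos (rpow_pos_of_pos hq (1 / N))
  rw [Real.log_rpow hq, one_div, inv_mul_le_iff₀ (one_pos.trans_le hN)] at h
  rw [one_div]
  linarith

lemma exists_mul_logFac_rpow_le {α : ℝ} (hα : 0 ≤ α) :
    ∃ C > 0, ∀ r τ : ℝ, 0 < r → r ≤ τ → r * logFac r ^ α ≤ C * (τ * logFac τ ^ α) := by
  set N : ℝ := α + 1
  have hN0 : 0 < N := by positivity
  refine ⟨N ^ α, by positivity, fun r τ hr hrτ ↦ ?_⟩
  have hτ : 0 < τ := hr.trans_le hrτ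
  have hq : 1 ≤ τ / r := (one_le_div hr).2 hrτ
  have hLr := logFac_pos hr
  have hLτ := logFac_pos hτ
  have h_log : logFac r ≤ N * (τ / r) ^ (1 / N) * logFac τ := by
    have h1 := logFac_le_log_div_add_logFac hr hrτ
    have h2 := one_add_log_le_mul_rpow (le_add_of_nonneg_left hα) (one_pos.trans_le hq)
    nlinarith [one_le_logFac hτ, Real.log_nonneg hq]
  have h_root : ((τ / r) ^ (1 / N)) ^ α ≤ τ / r := by
    rw [← rpow_mul (by positivity), one_div_mul_eq_div]
    exact rpow_le_self_of_one_le hq ((div_le_one hN0).2 (by linarith))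
  calc r * logFac r ^ α
      ≤ r * (N * (τ / r) ^ (1 / N) * logFac τ) ^ α := by gcongr
    _ = r * (N ^ α * ((τ / r) ^ (1 / N)) ^ α * logFac τ ^ α) := by
        rw [mul_rpow (by positivity) hLτ.le, mul_rpow hN0.le (by positivity)]
    _ ≤ r * (N ^ α * (τ / r) * logFac τ ^ α) := by gcongr
    _ = N ^ α * (τ * logFac τ ^ α) := by field_simp

lemma exists_one_le_mul_rpow_neg {a T : ℝ} (ha : 0 < a) (hT : 0 < T) :
    ∃ C > 0, ∀ t ∈ Ioc 0 T, 1 ≤ C * (t ^ (-a) * logFac t ^ (-a)) := by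
  obtain ⟨K, hK, h⟩ := exists_mul_logFac_rpow_le zero_le_one
  have hLT := logFac_pos hT
  refine ⟨(K * (T * logFac T)) ^ a, by positivity, fun t ⟨ht, htT⟩ ↦ ?_⟩
  have hLt := logFac_pos ht
  have hq := h t T ht htT
  rw [Real.rpow_one, Real.rpow_one] at hq
  rw [← mul_rpow ht.le hLt.le, rpow_neg (by positivity), ← div_eq_mul_inv,
    one_le_div (by positivity)]
  gcongr

lemma hasDerivAt_logFac_rpow_neg (β : ℝ) {s : ℝ} (hs : 0 < s) :
    HasDerivAt (fun s ↦ logFac s ^ (-β))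
      (β * (s⁻¹ * logFac s ^ (-(1 + β))) / (exp 1 * s + 1)) s := by
  have h_inner : HasDerivAt (fun s : ℝ ↦ exp 1 + 1 / s) (-(s ^ 2)⁻¹) s := by
    simpa only [one_div] using (hasDerivAt_inv hs.ne').const_add (exp 1)
  have h_log : HasDerivAt logFac (-(s ^ 2)⁻¹ / (exp 1 + 1 / s)) s := h_inner.log (by positivity)
  convert h_log.rpow_const (p := -β) (Or.inl (logFac_pos hs).ne') using 1
  rw [show -β - 1 = -(1 + β) by ring]
  field_simp

-- `s ↦ logFac s ^ (-β)` is a primitive of the integrand up to the bounded factor `e s + 1`.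
lemma lintegral_inv_mul_logFac_rpow_le {β t : ℝ} (hβ : 0 < β) (ht : 0 < t) :
    ∫⁻ s in Ioo 0 t, ENNReal.ofReal (s⁻¹ * logFac s ^ (-(1 + β))) ≤
      ENNReal.ofReal ((exp 1 * t + 1) / β * logFac t ^ (-β)) := by
  set F' : ℝ → ℝ := fun s ↦ β * (s⁻¹ * logFac s ^ (-(1 + β))) / (exp 1 * s + 1)
  have hmono : MonotoneOn (fun s ↦ logFac s ^ (-β)) (Ioo 0 t) :=
    (logFac_rpow_neg_monotoneOn hβ.le).mono fun s hs ↦ hs.1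
  have h_image : (fun s ↦ logFac s ^ (-β)) '' Ioo 0 t ⊆ Icc 0 (logFac t ^ (-β)) := by
    rintro _ ⟨s, hs, rfl⟩
    exact ⟨rpow_nonneg (logFac_pos hs.1).le _,
      logFac_rpow_neg_monotoneOn hβ.le hs.1 ht hs.2.le⟩
  calc ∫⁻ s in Ioo 0 t, ENNReal.ofReal (s⁻¹ * logFac s ^ (-(1 + β)))
      ≤ ∫⁻ s in Ioo 0 t, ENNReal.ofReal ((exp 1 * t + 1) / β) * ENNReal.ofReal (F' s) := by
        refine setLIntegral_mono' measurableSet_Ioo fun s ⟨hs, hst⟩ ↦ ?_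
        have hL := logFac_pos hs
        have hF' : (exp 1 * t + 1) / β * F' s =
            (exp 1 * t + 1) / (exp 1 * s + 1) * (s⁻¹ * logFac s ^ (-(1 + β))) := by
          simp only [F']
          field_simp
        rw [← ENNReal.ofReal_mul (by positivity), hF']
        refine ENNReal.ofReal_le_ofReal (le_mul_of_one_le_left (by positivity) ?_)
        rw [one_le_div (by positivity)]
        gcongr
    _ = ENNReal.ofReal ((exp 1 * t + 1) / β) *
          volume ((fun s ↦ logFac s ^ (-β)) '' Ioo 0 t) := by
        rw [lintegral_const_mul' _ _ ENNReal.ofReal_ne_top,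
          lintegral_deriv_eq_volume_image_of_monotoneOn measurableSet_Ioo
            (fun s hs ↦ (hasDerivAt_logFac_rpow_neg β hs.1).hasDerivWithinAt) hmono]
    _ ≤ ENNReal.ofReal ((exp 1 * t + 1) / β) * ENNReal.ofReal (logFac t ^ (-β)) := by
        gcongr
        simpa only [Real.volume_Icc, sub_zero] using measure_mono (μ := volume) h_image
    _ = _ := by rw [← ENNReal.ofReal_mul (by positivity)]

lemma lintegral_rpow_neg_Ioo {a t : ℝ} (ha : a < 1) (ht : 0 < t) :
    ∫⁻ s in Ioo 0 t, ENNReal.ofReal (s ^ (-a)) = ENNReal.ofReal (t ^ (1 - a) / (1 - a)) := by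
  have h_int : IntegrableOn (fun s : ℝ ↦ s ^ (-a)) (Ioc 0 t) :=
    (intervalIntegrable_iff_integrableOn_Ioc_of_le ht.le).1
      (intervalIntegral.intervalIntegrable_rpow' (by linarith))
  have h_nonneg : ∀ᵐ s ∂volume.restrict (Ioo 0 t), 0 ≤ s ^ (-a) :=
    ae_restrict_of_forall_mem measurableSet_Ioo fun s hs ↦ rpow_nonneg hs.1.le _
  rw [← ofReal_integral_eq_lintegral_ofReal (h_int.mono_set Ioo_subset_Ioc_self) h_nonneg,
    ← integral_Ioc_eq_integral_Ioo, ← intervalIntegral.integral_of_le ht.le,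
    integral_rpow (Or.inl (by linarith)), zero_rpow (by linarith), sub_zero, neg_add_eq_sub]

section HeatKernel

variable {n : ℕ}

local notation "𝔼" => EuclideanSpace ℝ (Fin n)

lemma heatKernel_nonneg (x : 𝔼) {t : ℝ} (ht : 0 ≤ t) : 0 ≤ heatKernel n x t := by
  unfold heatKernel
  positivity

@[fun_prop]
lemma measurable_heatKernel {α : Type*} [MeasurableSpace α] {ξ : α → 𝔼} {τ : α → ℝ}
    (hξ : Measurable ξ) (hτ : Measurable τ) :
    Measurable fun a ↦ heatKernel n (ξ a) (τ a) := by
  unfold heatKernel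
  fun_prop

lemma integral_heatKernel {t : ℝ} (ht : 0 < t) : ∫ x, heatKernel n x t = 1 := by
  have h_gauss : ∫ x : 𝔼, exp (-‖x‖ ^ 2 / (4 * t)) = (4 * π * t) ^ ((n : ℝ) / 2) := by
    have h := GaussianFourier.integral_rexp_neg_mul_sq_norm (V := 𝔼) (b := (4 * t)⁻¹)
      (by positivity)
    rw [finrank_euclideanSpace, Fintype.card_fin, div_inv_eq_mul, mul_comm π, mul_right_comm] at h
    rw [← h]
    refine integral_congr_ae (ae_of_all _ fun x ↦ ?_)
    dsimp only
    rw [neg_div, neg_mul, inv_mul_eq_div]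
  unfold heatKernel
  rw [integral_const_mul, h_gauss, ← Real.rpow_add (by positivity), neg_div, neg_add_cancel,
    Real.rpow_zero]

lemma integrable_heatKernel {t : ℝ} (ht : 0 < t) : Integrable fun x ↦ heatKernel n x t :=
  .of_integral_ne_zero (by rw [integral_heatKernel ht]; exact one_ne_zero)

lemma lintegral_heatKernel {t : ℝ} (ht : 0 < t) :
    ∫⁻ x, ENNReal.ofReal (heatKernel n x t) = 1 := by
  rw [← ofReal_integral_eq_lintegral_ofReal (integrable_heatKernel ht)
    (ae_of_all _ fun x ↦ heatKernel_nonneg x ht.le), integral_heatKernel ht, ENNReal.ofReal_one]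

lemma norm_sq_div_add_norm_sq_div {a b : ℝ} (ha : 0 < a) (hb : 0 < b) (x y z : 𝔼) :
    -‖x - y‖ ^ 2 / (4 * a) + -‖y - z‖ ^ 2 / (4 * b) =
      -‖x - z‖ ^ 2 / (4 * (a + b)) +
        -‖y - (a + b)⁻¹ • (b • x + a • z)‖ ^ 2 / (4 * (a * b / (a + b))) := by
  have hab : 0 < a + b := by positivity
  have h_center : y - (a + b)⁻¹ • (b • x + a • z) =
      (a + b)⁻¹ • (a • (y - z) - b • (x - y)) := by
    rw [← inv_smul_smul₀ hab.ne' y, ← smul_sub, inv_smul_smul₀ hab.ne']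
    congr 1
    module
  rw [h_center, ← sub_add_sub_cancel x y z]
  generalize x - y = v
  generalize y - z = w
  rw [norm_smul, mul_pow, norm_sub_sq_real, norm_smul, norm_smul, inner_smul_left,
    inner_smul_right, real_inner_comm, norm_add_sq_real]
  simp only [norm_eq_abs, mul_pow, sq_abs, conj_trivial]
  field_simp
  ring

lemma heatKernel_mul_heatKernel {a b : ℝ} (ha : 0 < a) (hb : 0 < b) (x y z : 𝔼) :
    heatKernel n (x - y) a * heatKernel n (y - z) b =
      heatKernel n (x - z) (a + b) *
        heatKernel n (y - (a + b)⁻¹ • (b • x + a • z)) (a * b / (a + b)) := by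
  unfold heatKernel
  rw [mul_mul_mul_comm, mul_mul_mul_comm ((4 * π * (a + b)) ^ _), ← Real.exp_add, ← Real.exp_add,
    norm_sq_div_add_norm_sq_div ha hb, ← mul_rpow (by positivity) (by positivity),
    ← mul_rpow (by positivity) (by positivity)]
  congr 2
  field_simp

lemma lintegral_heatKernel_mul_heatKernel {a b : ℝ} (ha : 0 < a) (hb : 0 < b) (x z : 𝔼) :
    ∫⁻ y, ENNReal.ofReal (heatKernel n (x - y) a) * ENNReal.ofReal (heatKernel n (y - z) b) =
      ENNReal.ofReal (heatKernel n (x - z) (a + b)) := by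
  have hab : 0 < a * b / (a + b) := by positivity
  simp_rw [← ENNReal.ofReal_mul (heatKernel_nonneg _ ha.le), heatKernel_mul_heatKernel ha hb,
    ENNReal.ofReal_mul (heatKernel_nonneg _ (add_pos ha hb).le)]
  rw [lintegral_const_mul _ (by fun_prop), lintegral_sub_right_eq_self
    (fun y ↦ ENNReal.ofReal (heatKernel n y (a * b / (a + b)))), lintegral_heatKernel hab, mul_one]

lemma heatKernel_le_heatKernel_two_mul {t : ℝ} (ht : 0 < t) {x y w : 𝔼} (h : dist y w ≤ √t) :
    heatKernel n (x - y) t ≤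
      2 ^ ((n : ℝ) / 2) * exp 1 * heatKernel n (x - w) (2 * t) := by
  have h_sq : ‖x - w‖ ^ 2 ≤ 2 * ‖x - y‖ ^ 2 + 2 * t := by
    have h_dist : dist y w ^ 2 ≤ t := (sq_le_sq₀ dist_nonneg (sqrt_nonneg t)).2 h |>.trans_eq
      (sq_sqrt ht.le)
    have h_tri : ‖x - w‖ ≤ ‖x - y‖ + dist y w := by
      simpa only [dist_eq_norm] using dist_triangle x y w
    nlinarith [sq_nonneg (‖x - y‖ - dist y w), norm_nonneg (x - w)]
  have h_exp : exp (-‖x - y‖ ^ 2 / (4 * t)) ≤ exp 1 * exp (-‖x - w‖ ^ 2 / (4 * (2 * t))) := by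
    rw [← Real.exp_add, Real.exp_le_exp, ← sub_nonneg]
    have : 1 + -‖x - w‖ ^ 2 / (4 * (2 * t)) - -‖x - y‖ ^ 2 / (4 * t) =
        (8 * t - ‖x - w‖ ^ 2 + 2 * ‖x - y‖ ^ 2) / (8 * t) := by
      field_simp
      ring
    rw [this]
    exact div_nonneg (by linarith) (by positivity)
  have h_pow : (4 * π * t) ^ (-(n : ℝ) / 2) =
      2 ^ ((n : ℝ) / 2) * (4 * π * (2 * t)) ^ (-(n : ℝ) / 2) := by
    rw [show 4 * π * (2 * t) = 2 * (4 * π * t) by ring,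
      mul_rpow zero_le_two (by positivity), ← mul_assoc, ← Real.rpow_add two_pos, neg_div,
      add_neg_cancel, Real.rpow_zero, one_mul]
  calc heatKernel n (x - y) t
      ≤ (4 * π * t) ^ (-(n : ℝ) / 2) * (exp 1 * exp (-‖x - w‖ ^ 2 / (4 * (2 * t)))) := by
        unfold heatKernel
        gcongr
    _ = _ := by
        rw [h_pow, heatKernel]
        ring

/-- The heat semigroup `S(t)f(x) = ∫ G(x - y, t) f(y) dy` acting on `[0, ∞]`-valued functions, so
that no integrability is needed to manipulate it. -/
noncomputable def heatLIntegral (t : ℝ) (f : 𝔼 → ℝ≥0∞) (x : 𝔼) : ℝ≥0∞ :=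
  ∫⁻ y, ENNReal.ofReal (heatKernel n (x - y) t) * f y

@[fun_prop]
lemma measurable_heatLIntegral {α : Type*} [MeasurableSpace α] {τ : α → ℝ} {f : α → 𝔼 → ℝ≥0∞}
    {ξ : α → 𝔼} (hτ : Measurable τ) (hf : Measurable (uncurry f)) (hξ : Measurable ξ) :
    Measurable fun a ↦ heatLIntegral (τ a) (f a) (ξ a) := by
  refine Measurable.lintegral_prod_right (f := fun (a : α) (y : 𝔼) ↦
    ENNReal.ofReal (heatKernel n (ξ a - y) (τ a)) * f a y) (.mul (by fun_prop) hf)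

lemma heatLIntegral_mono {t : ℝ} {f g : 𝔼 → ℝ≥0∞} (h : f ≤ g) (x : 𝔼) :
    heatLIntegral t f x ≤ heatLIntegral t g x :=
  lintegral_mono fun y ↦ mul_le_mul_right (h y) _

lemma heatLIntegral_const {t : ℝ} (ht : 0 < t) (c : ℝ≥0∞) (x : 𝔼) :
    heatLIntegral t (fun _ ↦ c) x = c := by
  rw [heatLIntegral, lintegral_mul_const _ (by fun_prop), lintegral_sub_left_eq_self
    (fun y ↦ ENNReal.ofReal (heatKernel n y t)), lintegral_heatKernel ht, one_mul]

lemma heatLIntegral_const_mul {t : ℝ} (c : ℝ≥0∞) {f : 𝔼 → ℝ≥0∞} (hf : Measurable f) (x : 𝔼) :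
    heatLIntegral t (fun y ↦ c * f y) x = c * heatLIntegral t f x := by
  simp_rw [heatLIntegral, mul_left_comm _ c]
  exact lintegral_const_mul _ (by fun_prop)

lemma heatLIntegral_add {t : ℝ} {f : 𝔼 → ℝ≥0∞} (hf : Measurable f) (g : 𝔼 → ℝ≥0∞) (x : 𝔼) :
    heatLIntegral t (fun y ↦ f y + g y) x = heatLIntegral t f x + heatLIntegral t g x := by
  simp_rw [heatLIntegral, mul_add]
  exact lintegral_add_left (by fun_prop) _

lemma heatLIntegral_heatLIntegral {f : 𝔼 → ℝ≥0∞} (hf : Measurable f) {a b : ℝ} (ha : 0 < a)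
    (hb : 0 < b) (x : 𝔼) :
    heatLIntegral a (heatLIntegral b f) x = heatLIntegral (a + b) f x := by
  calc heatLIntegral a (heatLIntegral b f) x
      = ∫⁻ y, ∫⁻ z, ENNReal.ofReal (heatKernel n (x - y) a) *
          (ENNReal.ofReal (heatKernel n (y - z) b) * f z) :=
        lintegral_congr fun y ↦ (lintegral_const_mul _ (by fun_prop)).symm
    _ = ∫⁻ z, ∫⁻ y, ENNReal.ofReal (heatKernel n (x - y) a) *
          (ENNReal.ofReal (heatKernel n (y - z) b) * f z) :=
        lintegral_lintegral_swap (by fun_prop)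
    _ = heatLIntegral (a + b) f x := by
        refine lintegral_congr fun z ↦ ?_
        simp_rw [← mul_assoc]
        rw [lintegral_mul_const _ (by fun_prop), lintegral_heatKernel_mul_heatKernel ha hb]

end HeatKernel

-- Spread `v * g y` over `ball y ρ`, where `h` dominates `g y`, and exchange the integrals.
lemma mul_lintegral_mul_le_of_forall_setLIntegral_ball_le {X : Type*} [PseudoMetricSpace X]
    [SecondCountableTopology X] [MeasurableSpace X] [OpensMeasurableSpace X] {μ : Measure X}
    [SFinite μ] {f g h : X → ℝ≥0∞} (hf : Measurable f) (hg : Measurable g) (hh : Measurable h)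
    {ρ : ℝ} {v M : ℝ≥0∞} (hv : ∀ y, v ≤ μ (ball y ρ)) (hgh : ∀ y w, dist w y < ρ → g y ≤ h w)
    (hM : ∀ w, ∫⁻ y in ball w ρ, f y ∂μ ≤ M) :
    v * ∫⁻ y, g y * f y ∂μ ≤ (∫⁻ w, h w ∂μ) * M := by
  have h_near : MeasurableSet {q : X × X | dist q.2 q.1 < ρ} :=
    measurableSet_lt (by fun_prop) (by fun_prop)
  set Φ : X → X → ℝ≥0∞ := fun y w ↦
    {q : X × X | dist q.2 q.1 < ρ}.indicator (fun q ↦ h q.2 * f q.1) (y, w)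
  have hΦ : Measurable (uncurry Φ) := Measurable.indicator (by fun_prop) h_near
  have h_spread (y : X) : v * (g y * f y) ≤ ∫⁻ w, Φ y w ∂μ :=
    calc v * (g y * f y) ≤ ∫⁻ _ in ball y ρ, g y * f y ∂μ := by
          rw [setLIntegral_const, mul_comm]
          gcongr
          exact hv y
      _ ≤ ∫⁻ w in ball y ρ, h w * f y ∂μ :=
          setLIntegral_mono' measurableSet_ball fun w hw ↦ by
            gcongr
            exact hgh y w hw
      _ = ∫⁻ w, Φ y w ∂μ := (lintegral_indicator measurableSet_ball _).symm
  calc v * ∫⁻ y, g y * f y ∂μ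
      = ∫⁻ y, v * (g y * f y) ∂μ := (lintegral_const_mul _ (by fun_prop)).symm
    _ ≤ ∫⁻ y, ∫⁻ w, Φ y w ∂μ ∂μ := lintegral_mono h_spread
    _ = ∫⁻ w, ∫⁻ y, Φ y w ∂μ ∂μ := lintegral_lintegral_swap hΦ.aemeasurable
    _ = ∫⁻ w, h w * ∫⁻ y in ball w ρ, f y ∂μ ∂μ := by
        refine lintegral_congr fun w ↦ ?_
        rw [← lintegral_const_mul _ hf, ← lintegral_indicator measurableSet_ball]
        refine lintegral_congr fun y ↦ ?_
        simp only [Φ, indicator, mem_ball, mem_ofPred_eq, dist_comm w y]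
    _ ≤ ∫⁻ w, h w * M ∂μ := by
        gcongr with w
        exact hM w
    _ = (∫⁻ w, h w ∂μ) * M := lintegral_mul_const _ hh

lemma exists_volume_ball_sqrt_eq (n : ℕ) : ∃ v > 0, ∀ (x : EuclideanSpace ℝ (Fin n)) {t : ℝ},
    0 < t → volume (ball x √t) = ENNReal.ofReal (v * t ^ ((n : ℝ) / 2)) := by
  refine ⟨volume.real (ball (0 : EuclideanSpace ℝ (Fin n)) 1),
    ENNReal.toReal_pos (measure_ball_pos _ _ one_pos).ne' measure_ball_lt_top.ne, fun x t ht ↦ ?_⟩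
  rw [Measure.addHaar_ball_of_pos _ _ (sqrt_pos.2 ht), finrank_euclideanSpace_fin,
    ENNReal.ofReal_mul measureReal_nonneg, ofReal_measureReal measure_ball_lt_top.ne, mul_comm,
    Real.sqrt_eq_rpow, ← rpow_mul_natCast ht.le, one_div_mul_eq_div]

lemma exists_heatLIntegral_le (n : ℕ) : ∃ K > 0,
    ∀ {f : EuclideanSpace ℝ (Fin n) → ℝ≥0∞}, Measurable f → ∀ {t : ℝ}, 0 < t → ∀ {M : ℝ≥0∞},
      (∀ w, ∫⁻ y in ball w √t, f y ≤ M) → ∀ x,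
        heatLIntegral t f x ≤ ENNReal.ofReal (K * t ^ (-(n : ℝ) / 2)) * M := by
  obtain ⟨v, hv, h_ball⟩ := exists_volume_ball_sqrt_eq n
  set c : ℝ := 2 ^ ((n : ℝ) / 2) * exp 1
  refine ⟨c / v, by positivity, fun {f} hf {t} ht {M} hM x ↦ ?_⟩
  have h_doubling : ∀ y w, dist w y < √t → ENNReal.ofReal (heatKernel n (x - y) t) ≤
      ENNReal.ofReal (c * heatKernel n (x - w) (2 * t)) := fun y w h ↦
    ENNReal.ofReal_le_ofReal <| heatKernel_le_heatKernel_two_mul ht (dist_comm w y ▸ h.le)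
  have h_mass : ∫⁻ w, ENNReal.ofReal (c * heatKernel n (x - w) (2 * t)) = ENNReal.ofReal c := by
    simp_rw [ENNReal.ofReal_mul (show 0 ≤ c by positivity), mul_comm (ENNReal.ofReal c)]
    exact heatLIntegral_const (by positivity) _ x
  have h_main := mul_lintegral_mul_le_of_forall_setLIntegral_ball_le hf (by fun_prop)
    (by fun_prop) (fun y ↦ (h_ball y ht).ge) h_doubling hM
  rw [h_mass] at h_main
  have hv' : 0 < v * t ^ ((n : ℝ) / 2) := by positivity
  have h_const : c / v * t ^ (-(n : ℝ) / 2) = c / (v * t ^ ((n : ℝ) / 2)) := by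
    rw [neg_div, rpow_neg ht.le]
    field_simp
  rw [h_const, ENNReal.ofReal_div_of_pos hv', ENNReal.mul_comm_div, ← mul_div_assoc,
    ENNReal.le_div_iff_mul_le (.inl (ENNReal.ofReal_pos.2 hv').ne') (.inl ENNReal.ofReal_ne_top),
    mul_comm]
  exact h_main

/-- `f` has uniformly local weak Zygmund norm `|||f|||_{1,γ;ρ}` at most `C`, in a form suited to
`[0, ∞]`-valued functions on a metric measure space. Every `r ≥ μ E` is allowed on the right, which
is no loss since `logFac` is antitone. -/
def IsZygmundBounded {X : Type*} [PseudoMetricSpace X] [MeasurableSpace X] (μ : Measure X)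
    (γ ρ C : ℝ) (f : X → ℝ≥0∞) : Prop :=
  ∀ ⦃z : X⦄ ⦃E : Set X⦄ ⦃r : ℝ⦄, MeasurableSet E → E ⊆ ball z ρ → 0 < r →
    μ E ≤ ENNReal.ofReal r → ∫⁻ x in E, f x ∂μ ≤ ENNReal.ofReal (C * logFac r ^ (-γ))

/-- The function `|φ| log(e + |φ|)^β`, which trades `β` logarithms of the Zygmund exponent of `φ`
for a quantity that the linear heat flow controls pointwise. -/
noncomputable def logGain {X : Type*} (β : ℝ) (φ : X → ℝ) (x : X) : ℝ≥0∞ :=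
  ‖φ x‖ₑ * ENNReal.ofReal (Real.log (exp 1 + |φ x|) ^ β)

lemma one_le_log_exp_one_add_abs (a : ℝ) : 1 ≤ Real.log (exp 1 + |a|) := by
  rw [Real.le_log_iff_exp_le (by positivity)]
  exact le_add_of_nonneg_right (abs_nonneg a)

@[fun_prop]
lemma measurable_logGain {X : Type*} [MeasurableSpace X] {β : ℝ} {φ : X → ℝ} (hφ : Measurable φ) :
    Measurable (logGain β φ) := by
  unfold logGain
  fun_prop

lemma ofReal_rpow_le_add_tsum_dyadic {ℓ β a : ℝ} (hℓ : 0 < ℓ) (hβ : 0 ≤ β) (ha : 0 ≤ a) :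
    ENNReal.ofReal (a ^ β) ≤ ENNReal.ofReal (ℓ ^ β) +
      ∑' k : ℕ, if 2 ^ k * ℓ ≤ a then ENNReal.ofReal ((2 ^ (k + 1) * ℓ) ^ β) else 0 := by
  rcases le_or_gt a ℓ with h | h
  · refine le_add_right ?_
    gcongr
  · obtain ⟨k, hk, hk'⟩ := exists_nat_pow_near ((one_le_div hℓ).2 h.le) one_lt_two
    rw [le_div_iff₀ hℓ] at hk
    rw [div_lt_iff₀ hℓ] at hk'
    refine le_add_left (le_trans ?_ (ENNReal.le_tsum k))
    rw [if_pos hk]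
    gcongr

lemma ofReal_add_tsum_dyadic {α β C ℓ : ℝ} (hβα : β < α) (hC : 0 ≤ C) (hℓ : 0 < ℓ) :
    ENNReal.ofReal (C * ℓ ^ (-α)) * ENNReal.ofReal (ℓ ^ β) +
        ∑' k : ℕ, ENNReal.ofReal (C * (2 ^ k * ℓ) ^ (-α)) *
          ENNReal.ofReal ((2 ^ (k + 1) * ℓ) ^ β) =
      ENNReal.ofReal ((1 + 2 ^ β * (1 - 2 ^ (β - α))⁻¹) * C * ℓ ^ (-(α - β))) := by
  set q : ℝ := 2 ^ (β - α) with hq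
  have hq0 : 0 ≤ q := by positivity
  have hq1 : q < 1 := rpow_lt_one_of_one_lt_of_neg one_lt_two (sub_neg.2 hβα)
  have h_exp (b : ℝ) (hb : 0 < b) : b ^ (-α) * b ^ β = b ^ (-(α - β)) := by
    rw [← Real.rpow_add hb]
    ring_nf
  have h_term (k : ℕ) : ENNReal.ofReal (C * (2 ^ k * ℓ) ^ (-α)) *
      ENNReal.ofReal ((2 ^ (k + 1) * ℓ) ^ β) =
        ENNReal.ofReal (2 ^ β * C * ℓ ^ (-(α - β)) * q ^ k) := by
    have h_split : ((2 : ℝ) ^ (k + 1) * ℓ) ^ β = 2 ^ β * (2 ^ k * ℓ) ^ β := by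
      rw [pow_succ', mul_assoc, mul_rpow zero_le_two (by positivity)]
    have h_pow : q ^ k = ((2 : ℝ) ^ k) ^ (-(α - β)) := by
      rw [hq, neg_sub, ← rpow_natCast_mul zero_le_two, ← rpow_mul_natCast zero_le_two, mul_comm]
    rw [← ENNReal.ofReal_mul (by positivity), h_split, h_pow]
    congr 1
    calc C * (2 ^ k * ℓ) ^ (-α) * (2 ^ β * (2 ^ k * ℓ) ^ β)
        = 2 ^ β * C * ((2 ^ k * ℓ) ^ (-α) * (2 ^ k * ℓ) ^ β) := by ring
      _ = _ := by
          rw [h_exp _ (by positivity), mul_rpow (by positivity) hℓ.le]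
          ring
  have hsum : Summable fun k ↦ 2 ^ β * C * ℓ ^ (-(α - β)) * q ^ k :=
    (summable_geometric_of_lt_one hq0 hq1).mul_left _
  have : 0 ≤ (1 - q)⁻¹ := inv_nonneg.2 (sub_nonneg.2 hq1.le)
  simp_rw [h_term]
  rw [← ENNReal.ofReal_mul (by positivity), mul_assoc C, h_exp ℓ hℓ,
    ← ENNReal.ofReal_tsum_of_nonneg (fun k ↦ by positivity) hsum, tsum_mul_left,
    tsum_geometric_of_lt_one hq0 hq1, ← ENNReal.ofReal_add (by positivity) (by positivity)]
  ring_nf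

lemma exists_isZygmundBounded_of_le {X : Type*} [PseudoMetricSpace X] [MeasurableSpace X]
    {α β : ℝ} (hα : 0 ≤ α) (hβ : 0 ≤ β) :
    ∃ K > 0, ∀ {μ : Measure X} {ρ A τ : ℝ} {f : X → ℝ≥0∞}, 0 ≤ A → 0 < τ →
      IsZygmundBounded μ (α - β) ρ (A * logFac τ ^ (-β)) f →
      (∀ x, f x ≤ ENNReal.ofReal (A * (τ⁻¹ * logFac τ ^ (-α)))) →
        IsZygmundBounded μ α ρ (K * A) f := by
  obtain ⟨K, hK, hquasi⟩ := exists_mul_logFac_rpow_le hα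
  refine ⟨K + 1, by positivity, fun {μ ρ A τ f} hA hτ hf hsup z E r hE hEz hr hEr ↦ ?_⟩
  have hLτ := logFac_pos hτ
  have hLr := logFac_pos hr
  rcases le_total r τ with hrτ | hτr
  · calc ∫⁻ x in E, f x ∂μ ≤ ∫⁻ _ in E, ENNReal.ofReal (A * (τ⁻¹ * logFac τ ^ (-α))) ∂μ :=
          lintegral_mono hsup
      _ ≤ ENNReal.ofReal (A * (τ⁻¹ * logFac τ ^ (-α))) * ENNReal.ofReal r := by
          rw [setLIntegral_const]
          gcongr
      _ ≤ ENNReal.ofReal ((K + 1) * A * logFac r ^ (-α)) := by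
          rw [← ENNReal.ofReal_mul (by positivity)]
          refine ENNReal.ofReal_le_ofReal ?_
          have h_ratio : τ⁻¹ * logFac τ ^ (-α) * r ≤ K * logFac r ^ (-α) := by
            rw [rpow_neg hLτ.le, rpow_neg hLr.le, ← mul_inv, ← div_eq_mul_inv K, inv_mul_eq_div,
              div_le_div_iff₀ (by positivity) (by positivity)]
            exact hquasi r τ hr hrτ
          calc A * (τ⁻¹ * logFac τ ^ (-α)) * r = A * (τ⁻¹ * logFac τ ^ (-α) * r) := by ring
            _ ≤ A * ((K + 1) * logFac r ^ (-α)) := mul_le_mul_of_nonneg_left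
                (h_ratio.trans (mul_le_mul_of_nonneg_right (by linarith) (by positivity))) hA
            _ = _ := by ring
  · refine (hf hE hEz hr hEr).trans (ENNReal.ofReal_le_ofReal ?_)
    calc A * logFac τ ^ (-β) * logFac r ^ (-(α - β))
        ≤ A * logFac r ^ (-β) * logFac r ^ (-(α - β)) := by
          gcongr A * ?_ * _
          exact logFac_rpow_neg_monotoneOn hβ hτ hr hτr
      _ = 1 * A * logFac r ^ (-α) := by
          rw [mul_assoc, ← Real.rpow_add hLr, one_mul]
          ring_nf
      _ ≤ (K + 1) * A * logFac r ^ (-α) := by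
          gcongr
          exact le_add_of_nonneg_left hK.le

namespace IsZygmundBounded

variable {X : Type*} [PseudoMetricSpace X] [MeasurableSpace X] {μ : Measure X}
  {α β γ ρ C C' : ℝ} {f g : X → ℝ≥0∞}

lemma mono (hf : IsZygmundBounded μ γ ρ C f) (hgf : g ≤ f) (hC : C ≤ C') :
    IsZygmundBounded μ γ ρ C' g := fun _ _ _ hE hEz hr hEr ↦
  (lintegral_mono hgf).trans <| (hf hE hEz hr hEr).trans <| ENNReal.ofReal_le_ofReal <|
    mul_le_mul_of_nonneg_right hC (rpow_nonneg (logFac_pos hr).le _)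

lemma congr_ae (hf : IsZygmundBounded μ γ ρ C f) (hfg : f =ᵐ[μ] g) :
    IsZygmundBounded μ γ ρ C g := fun _ _ _ hE hEz hr hEr ↦
  (lintegral_congr_ae (ae_restrict_of_ae hfg)).symm.trans_le (hf hE hEz hr hEr)

lemma add (hf : IsZygmundBounded μ γ ρ C f) (hg : IsZygmundBounded μ γ ρ C' g)
    (hfm : Measurable f) (hC : 0 ≤ C) (hC' : 0 ≤ C') :
    IsZygmundBounded μ γ ρ (C + C') (fun x ↦ f x + g x) := by
  intro z E r hE hEz hr hEr
  have hL := logFac_pos hr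
  rw [lintegral_add_left hfm, add_mul, ENNReal.ofReal_add (by positivity) (by positivity)]
  exact add_le_add (hf hE hEz hr hEr) (hg hE hEz hr hEr)

lemma const_mul (hf : IsZygmundBounded μ γ ρ C f) {c : ℝ} (hc : 0 ≤ c) :
    IsZygmundBounded μ γ ρ (c * C) (fun x ↦ ENNReal.ofReal c * f x) := by
  intro z E r hE hEz hr hEr
  rw [lintegral_const_mul' _ _ ENNReal.ofReal_ne_top, mul_assoc, ENNReal.ofReal_mul hc]
  gcongr
  exact hf hE hEz hr hEr

lemma lintegral {Y : Type*} [MeasurableSpace Y] [SFinite μ] {ν : Measure Y}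
    [IsProbabilityMeasure ν] {F : Y → X → ℝ≥0∞} (hFm : Measurable (uncurry F))
    (hF : ∀ w, IsZygmundBounded μ γ ρ C (F w)) :
    IsZygmundBounded μ γ ρ C (fun x ↦ ∫⁻ w, F w x ∂ν) := by
  intro z E r hE hEz hr hEr
  rw [lintegral_lintegral_swap (f := fun x w ↦ F w x) (hFm.comp measurable_swap).aemeasurable]
  calc ∫⁻ w, ∫⁻ x in E, F w x ∂μ ∂ν
      ≤ ∫⁻ _, ENNReal.ofReal (C * logFac r ^ (-γ)) ∂ν :=
        lintegral_mono fun w ↦ hF w hE hEz hr hEr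
    _ = _ := by rw [lintegral_const, measure_univ, mul_one]

lemma exists_const (hα : 0 ≤ α) {V : ℝ} (hV : 0 < V)
    (hball : ∀ z, μ (ball z ρ) ≤ ENNReal.ofReal V) {δ : ℝ} (hδ : 0 ≤ δ) :
    ∃ K ≥ 0, IsZygmundBounded μ α ρ K (fun _ ↦ ENNReal.ofReal δ) := by
  obtain ⟨K, hK, h⟩ := exists_isZygmundBounded_of_le (X := X) hα hα
  have hLV := logFac_pos hV
  refine ⟨K * (δ * V * logFac V ^ α), by positivity, h (by positivity) hV ?_ fun _ ↦ ?_⟩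
  · intro z E r _ hEz _ _
    rw [setLIntegral_const, sub_self, neg_zero, Real.rpow_zero, mul_one, rpow_neg hLV.le,
      mul_assoc, mul_inv_cancel₀ (by positivity), mul_one, ENNReal.ofReal_mul hδ]
    gcongr
    exact (measure_mono hEz).trans (hball z)
  · refine ENNReal.ofReal_le_ofReal (le_of_eq ?_)
    rw [rpow_neg hLV.le]
    field_simp

lemma exists_setLIntegral_le_of_isCompact [OpensMeasurableSpace X] (γ C : ℝ) (hρ : 0 < ρ) {V : ℝ}
    (hV : 0 < V) (hball : ∀ z, μ (ball z ρ) ≤ ENNReal.ofReal V) {K : Set X} (hK : IsCompact K) :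
    ∃ M : ℝ, ∀ f, IsZygmundBounded μ γ ρ C f → ∫⁻ x in K, f x ∂μ ≤ ENNReal.ofReal M := by
  obtain ⟨s, -, hs, hsK⟩ := hK.finite_cover_balls hρ
  refine ⟨hs.toFinset.card * (C * logFac V ^ (-γ)), fun f hf ↦ ?_⟩
  calc ∫⁻ x in K, f x ∂μ
      ≤ ∫⁻ x in ⋃ z ∈ hs.toFinset, ball z ρ, f x ∂μ :=
        lintegral_mono_set (by simpa only [Finite.mem_toFinset] using hsK)
    _ ≤ ∑ z ∈ hs.toFinset, ∫⁻ x in ball z ρ, f x ∂μ := by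
        simp_rw [← withDensity_apply f measurableSet_ball, ← withDensity_apply f
          (Finset.measurableSet_biUnion _ fun _ _ ↦ measurableSet_ball)]
        exact measure_biUnion_finset_le _ _
    _ ≤ ∑ _ ∈ hs.toFinset, ENNReal.ofReal (C * logFac V ^ (-γ)) :=
        Finset.sum_le_sum fun _ _ ↦ hf measurableSet_ball subset_rfl hV (hball _)
    _ = _ := by
        rw [Finset.sum_const, nsmul_eq_mul, ENNReal.ofReal_mul (Nat.cast_nonneg _),
          ENNReal.ofReal_natCast]

-- Chebyshev's inequality bounds the measure of the superlevel set by `(e ^ ℓ - e)⁻¹`, and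
-- `logFac (e ^ ℓ - e)⁻¹ = ℓ`.
lemma setLIntegral_superlevel_le {φ : X → ℝ} (h : IsZygmundBounded μ α ρ C (fun x ↦ ‖φ x‖ₑ))
    (hφ : Measurable φ) (hα : 0 ≤ α) (hC : C ≤ 1) {z : X} {E : Set X} (hE : MeasurableSet E)
    (hEz : E ⊆ ball z ρ) {r : ℝ} (hr : 0 < r) (hEr : μ E ≤ ENNReal.ofReal r) {ℓ : ℝ}
    (hℓ : 1 < ℓ) :
    ∫⁻ x in {x | ℓ ≤ Real.log (exp 1 + |φ x|)} ∩ E, ‖φ x‖ₑ ∂μ ≤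
      ENNReal.ofReal (C * ℓ ^ (-α)) := by
  set A := {x | ℓ ≤ Real.log (exp 1 + |φ x|)}
  have hA : MeasurableSet A := measurableSet_le (by fun_prop) (by fun_prop)
  have hlam : 0 < exp ℓ - exp 1 := sub_pos.2 (exp_lt_exp.2 hℓ)
  have h_large : ∀ x ∈ A ∩ E, ENNReal.ofReal (exp ℓ - exp 1) ≤ ‖φ x‖ₑ := by
    rintro x ⟨hx : ℓ ≤ _, -⟩
    rw [Real.le_log_iff_exp_le (by positivity)] at hx
    rw [enorm_eq_ofReal_abs]
    exact ENNReal.ofReal_le_ofReal (sub_le_iff_le_add'.2 hx)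
  have h_mass : ENNReal.ofReal (exp ℓ - exp 1) * μ (A ∩ E) ≤ 1 :=
    calc ENNReal.ofReal (exp ℓ - exp 1) * μ (A ∩ E)
        = ∫⁻ _ in A ∩ E, ENNReal.ofReal (exp ℓ - exp 1) ∂μ := (setLIntegral_const _ _).symm
      _ ≤ ∫⁻ x in A ∩ E, ‖φ x‖ₑ ∂μ := setLIntegral_mono' (hA.inter hE) h_large
      _ ≤ ∫⁻ x in E, ‖φ x‖ₑ ∂μ := lintegral_mono_set inter_subset_right
      _ ≤ ENNReal.ofReal (C * logFac r ^ (-α)) := h hE hEz hr hEr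
      _ ≤ 1 := ENNReal.ofReal_le_one.2 <| mul_le_one₀ hC (rpow_nonneg (logFac_pos hr).le _)
          (rpow_le_one_of_one_le_of_nonpos (one_le_logFac hr) (neg_nonpos.2 hα))
  have h_meas : μ (A ∩ E) ≤ ENNReal.ofReal (exp ℓ - exp 1)⁻¹ := by
    rw [ENNReal.ofReal_inv_of_pos hlam, ENNReal.le_inv_iff_mul_le, mul_comm]
    exact h_mass
  have h_log : logFac (exp ℓ - exp 1)⁻¹ = ℓ := by
    rw [logFac, one_div, inv_inv, add_sub_cancel, Real.log_exp]
  simpa only [h_log] using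
    h (hA.inter hE) (inter_subset_right.trans hEz) (inv_pos.2 hlam) h_meas

lemma logGain {φ : X → ℝ} (h : IsZygmundBounded μ α ρ C (fun x ↦ ‖φ x‖ₑ)) (hφ : Measurable φ)
    (hβ : 0 ≤ β) (hβα : β < α) (hC0 : 0 ≤ C) (hC1 : C ≤ 1) :
    IsZygmundBounded μ (α - β) ρ ((1 + 2 ^ β * (1 - 2 ^ (β - α))⁻¹) * C) (logGain β φ) := by
  intro z E r hE hEz hr hEr
  set ℓ := logFac r with hℓ
  have hℓ1 : 1 < ℓ := by
    rw [hℓ, logFac, Real.lt_log_iff_exp_lt (by positivity)]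
    exact lt_add_of_pos_right _ (by positivity)
  have hℓ0 : 0 < ℓ := one_pos.trans hℓ1
  set A : ℕ → Set X := fun k ↦ {x | 2 ^ k * ℓ ≤ Real.log (exp 1 + |φ x|)} with hA
  have hAm (k : ℕ) : MeasurableSet (A k) := measurableSet_le (by fun_prop) (by fun_prop)
  set c : ℕ → ℝ≥0∞ := fun k ↦ ENNReal.ofReal ((2 ^ (k + 1) * ℓ) ^ β)
  have h_dyadic (x : X) : _root_.logGain β φ x ≤ ‖φ x‖ₑ * ENNReal.ofReal (ℓ ^ β) +
      ∑' k, (A k).indicator (fun x ↦ ‖φ x‖ₑ) x * c k := by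
    calc _root_.logGain β φ x ≤ _ := mul_le_mul_right (ofReal_rpow_le_add_tsum_dyadic hℓ0 hβ
          (zero_le_one.trans (one_le_log_exp_one_add_abs _))) _
      _ = _ := by
          rw [mul_add, ← ENNReal.tsum_mul_left]
          congr! 3 with k
          simp only [hA, c, indicator, mem_ofPred_eq, mul_ite, ite_mul, mul_zero, zero_mul]
  calc ∫⁻ x in E, _root_.logGain β φ x ∂μ
      ≤ ∫⁻ x in E, (‖φ x‖ₑ * ENNReal.ofReal (ℓ ^ β) +
          ∑' k, (A k).indicator (fun x ↦ ‖φ x‖ₑ) x * c k) ∂μ := lintegral_mono h_dyadic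
    _ = (∫⁻ x in E, ‖φ x‖ₑ ∂μ) * ENNReal.ofReal (ℓ ^ β) +
          ∑' k, (∫⁻ x in A k ∩ E, ‖φ x‖ₑ ∂μ) * c k := by
        have hind (k : ℕ) : Measurable ((A k).indicator fun x ↦ ‖φ x‖ₑ) :=
          hφ.enorm.indicator (hAm k)
        rw [lintegral_add_left (by fun_prop), lintegral_mul_const _ (by fun_prop),
          lintegral_tsum fun k ↦ ((hind k).mul_const _).aemeasurable]
        congr! 3 with k
        rw [lintegral_mul_const _ (hind k), lintegral_indicator (hAm k),
          Measure.restrict_restrict (hAm k)]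
    _ ≤ ENNReal.ofReal (C * ℓ ^ (-α)) * ENNReal.ofReal (ℓ ^ β) +
          ∑' k : ℕ, ENNReal.ofReal (C * (2 ^ k * ℓ) ^ (-α)) * c k := by
        gcongr with k
        · exact h hE hEz hr hEr
        · exact h.setLIntegral_superlevel_le hφ (hβ.trans hβα.le) hC1 hE hEz hr hEr
            (hℓ1.trans_le (le_mul_of_one_le_left hℓ0.le (one_le_pow₀ one_le_two)))
    _ = _ := ofReal_add_tsum_dyadic hβα hC0 hℓ0

end IsZygmundBounded

namespace IsZygmundBounded

lemma comp_isometryEquiv {X : Type*} [PseudoMetricSpace X] [MeasurableSpace X] [BorelSpace X]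
    {μ : Measure X} {γ ρ C : ℝ} {f : X → ℝ≥0∞} (hf : IsZygmundBounded μ γ ρ C f) {e : X ≃ᵢ X}
    (he : MeasurePreserving e μ μ) : IsZygmundBounded μ γ ρ C (fun x ↦ f (e x)) := by
  intro z E r hE hEz hr hEr
  have h_emb : MeasurableEmbedding e := e.toHomeomorph.measurableEmbedding
  rw [he.setLIntegral_comp_emb h_emb]
  refine hf (z := e z) (h_emb.measurableSet_image' hE) ?_ hr ?_
  · rw [← e.image_ball]
    exact image_mono hEz
  · rwa [← he.measure_preimage_emb h_emb, e.injective.preimage_image]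

variable {n : ℕ} {γ α ρ C : ℝ} {f : EuclideanSpace ℝ (Fin n) → ℝ≥0∞}

lemma comp_sub_right (hf : IsZygmundBounded volume γ ρ C f) (w : EuclideanSpace ℝ (Fin n)) :
    IsZygmundBounded volume γ ρ C (fun x ↦ f (x - w)) :=
  hf.comp_isometryEquiv (e := .subRight w) (measurePreserving_sub_right volume w)

lemma heatLIntegral (hf : IsZygmundBounded volume γ ρ C f) (hfm : Measurable f) {t : ℝ}
    (ht : 0 < t) : IsZygmundBounded volume γ ρ C (heatLIntegral t f) := by
  set ν : Measure (EuclideanSpace ℝ (Fin n)) :=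
    volume.withDensity fun w ↦ ENNReal.ofReal (heatKernel n w t)
  have : IsProbabilityMeasure ν :=
    ⟨by rw [withDensity_apply _ .univ, setLIntegral_univ, lintegral_heatKernel ht]⟩
  have h_avg : _root_.heatLIntegral t f = fun x ↦ ∫⁻ w, f (x - w) ∂ν := by
    ext x
    rw [lintegral_withDensity_eq_lintegral_mul _ (by fun_prop) (by fun_prop), _root_.heatLIntegral,
      ← lintegral_sub_left_eq_self _ x]
    simp only [Pi.mul_apply, _root_.sub_sub_cancel]
  rw [h_avg]
  exact .lintegral (F := fun w x ↦ f (x - w)) (by fun_prop) hf.comp_sub_right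

lemma of_zygNormUL_le {ε : ℝ} {φ : EuclideanSpace ℝ (Fin n) → ℝ} (hα : 0 ≤ α) (hε : 0 ≤ ε)
    (hφ : zygNormUL n 1 α ρ φ ≤ ENNReal.ofReal ε) :
    IsZygmundBounded volume α ρ ε (fun x ↦ ‖φ x‖ₑ) := by
  intro z E r hE hEz hr hEr
  have h_fin : volume E ≠ ∞ := (hEr.trans_lt ENNReal.ofReal_lt_top).ne
  rcases eq_or_ne (volume E) 0 with h0 | h0
  · rw [setLIntegral_measure_zero _ _ h0]
    exact zero_le
  set s := (volume E).toReal
  have hs : 0 < s := ENNReal.toReal_pos h0 h_fin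
  have hEs : volume E = ENNReal.ofReal s := (ENNReal.ofReal_toReal h_fin).symm
  have hL := logFac_pos hs
  have h_norm : ENNReal.ofReal (logFac s ^ α) * ∫⁻ x in E, ‖φ x‖ₑ ≤ ENNReal.ofReal ε := by
    refine le_trans ?_ <| (le_iSup (fun z ↦ zygNorm n 1 α ((ball z ρ).indicator φ)) z).trans hφ
    refine le_iSup_of_le ⟨s, hs⟩ ?_
    simp only [Real.rpow_one, div_one, ENNReal.rpow_one, ENNReal.ofReal_rpow_of_pos hL]
    gcongr
    refine le_iSup_of_le ⟨E, hE, hEs⟩ (setLIntegral_mono' hE fun x hx ↦ ?_)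
    rw [indicator_of_mem (hEz hx), enorm_eq_ofReal_abs]
  calc ∫⁻ x in E, ‖φ x‖ₑ ≤ ENNReal.ofReal ε / ENNReal.ofReal (logFac s ^ α) := by
        rwa [ENNReal.le_div_iff_mul_le (.inl (ENNReal.ofReal_pos.2 (by positivity)).ne')
          (.inl ENNReal.ofReal_ne_top), mul_comm]
    _ = ENNReal.ofReal (ε * logFac s ^ (-α)) := by
        rw [← ENNReal.ofReal_div_of_pos (by positivity), rpow_neg hL.le, div_eq_mul_inv]
    _ ≤ ENNReal.ofReal (ε * logFac r ^ (-α)) := by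
        gcongr ENNReal.ofReal (ε * ?_)
        exact logFac_rpow_neg_monotoneOn hα hs hr
          ((ENNReal.ofReal_le_ofReal_iff hr.le).1 (hEs ▸ hEr))

lemma zygNormUL_le {u : EuclideanSpace ℝ (Fin n) → ℝ} (hf : IsZygmundBounded volume α ρ C f)
    (hu : ∀ x, ‖u x‖ₑ ≤ f x) : zygNormUL n 1 α ρ u ≤ ENNReal.ofReal C := by
  refine iSup_le fun z ↦ iSup_le fun ⟨s, (hs : 0 < s)⟩ ↦ ?_
  have hL := logFac_pos hs
  simp only [Real.rpow_one, div_one, ENNReal.rpow_one, ENNReal.ofReal_rpow_of_pos hL]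
  have h_set (E : {E : Set (EuclideanSpace ℝ (Fin n)) //
      MeasurableSet E ∧ volume E = ENNReal.ofReal s}) :
      ∫⁻ x in E.1, ENNReal.ofReal |(ball z ρ).indicator u x| ≤
        ENNReal.ofReal (C * logFac s ^ (-α)) := by
    obtain ⟨E, hE, hEs⟩ := E
    calc ∫⁻ x in E, ENNReal.ofReal |(ball z ρ).indicator u x|
        ≤ ∫⁻ x in E, (ball z ρ).indicator f x := by
          gcongr with x
          rw [← enorm_eq_ofReal_abs, enorm_indicator_eq_indicator_enorm]
          exact indicator_le_indicator (hu x)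
      _ = ∫⁻ x in ball z ρ ∩ E, f x := by
          rw [lintegral_indicator measurableSet_ball, Measure.restrict_restrict measurableSet_ball]
      _ ≤ ENNReal.ofReal (C * logFac s ^ (-α)) := hf (measurableSet_ball.inter hE)
          inter_subset_left hs ((measure_mono inter_subset_right).trans_eq hEs)
  calc ENNReal.ofReal (logFac s ^ α) * _
      ≤ ENNReal.ofReal (logFac s ^ α) * ENNReal.ofReal (C * logFac s ^ (-α)) := by
        gcongr
        exact iSup_le h_set
    _ = ENNReal.ofReal C := by
        rw [← ENNReal.ofReal_mul (by positivity), rpow_neg hL.le]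
        field_simp

end IsZygmundBounded

lemma exists_heatLIntegral_le_of_isZygmundBounded {n : ℕ} (hn : 1 ≤ n) {γ : ℝ} (hγ : 0 ≤ γ) :
    ∃ K > 0, ∀ {f : EuclideanSpace ℝ (Fin n) → ℝ≥0∞} {ρ C t : ℝ}, Measurable f → 0 ≤ C →
      IsZygmundBounded volume γ ρ C f → 0 < t → √t ≤ ρ → ∀ x,
        heatLIntegral t f x ≤ ENNReal.ofReal (K * C * (t ^ (-(n : ℝ) / 2) * logFac t ^ (-γ))) := by
  have hn' : (0 : ℝ) < n := by exact_mod_cast hn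
  obtain ⟨v, hv, h_ball⟩ := exists_volume_ball_sqrt_eq n
  obtain ⟨c, hc, h_cmp⟩ := exists_mul_logFac_le_logFac_mul_rpow hv (half_pos hn')
  obtain ⟨K, hK, h_heat⟩ := exists_heatLIntegral_le n
  refine ⟨K * c ^ (-γ), by positivity, fun {f ρ C t} hfm hC hf ht htρ x ↦ ?_⟩
  have hL := logFac_pos ht
  have h_mass (w) : ∫⁻ y in ball w √t, f y ≤ ENNReal.ofReal (C * (c * logFac t) ^ (-γ)) := by
    refine (hf measurableSet_ball (ball_subset_ball htρ) (by positivity) (h_ball w ht).le).trans ?_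
    gcongr ENNReal.ofReal (C * ?_)
    exact rpow_le_rpow_of_nonpos (by positivity) (h_cmp t ht) (neg_nonpos.2 hγ)
  refine (h_heat hfm ht h_mass x).trans_eq ?_
  rw [← ENNReal.ofReal_mul (by positivity), mul_rpow hc.le hL.le]
  ring_nf

section Hammerstein

variable {X : Type*} [MeasurableSpace X] {μ : Measure X} {k : X → X → ℝ} {F : ℝ → ℝ} {a : X → ℝ}
  {U : X → ℝ≥0∞}

/-- `U` is a supersolution, in absolute value, of the Hammerstein equation
`u z = a z + ∫ k z w * F (u w) dμ(w)`. There is no condition at the points where `U = ∞`. -/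
def IsHammersteinSupersolution (μ : Measure X) (k : X → X → ℝ) (F : ℝ → ℝ) (a : X → ℝ)
    (U : X → ℝ≥0∞) : Prop :=
  ∀ z, ‖a z‖ₑ + ∫⁻ w, ENNReal.ofReal (k z w * F (U w).toReal) ∂μ ≤ U z

/-- The Picard iterates of the Hammerstein equation started from the supersolution `U`, which
decrease when `F` is monotone. -/
noncomputable def hammersteinIterate (μ : Measure X) (k : X → X → ℝ) (F : ℝ → ℝ) (a : X → ℝ)
    (U : X → ℝ≥0∞) : ℕ → X → ℝ
  | 0, z => (U z).toReal
  | m + 1, z => a z + ∫ w, k z w * F (hammersteinIterate μ k F a U m w) ∂μ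

lemma enorm_mul_apply_le (hF : Monotone F) (hF_abs : ∀ r, |F r| ≤ F |r|) {κ v : ℝ} (hκ : 0 ≤ κ)
    {b : ℝ≥0∞} (hb : b ≠ ∞) (hv : ‖v‖ₑ ≤ b) : ‖κ * F v‖ₑ ≤ ENNReal.ofReal (κ * F b.toReal) := by
  rw [enorm_eq_ofReal_abs, abs_mul, abs_of_nonneg hκ]
  gcongr
  rw [enorm_eq_ofReal_abs, ENNReal.ofReal_le_iff_le_toReal hb] at hv
  exact (hF_abs v).trans (hF hv)

lemma measurable_hammersteinIterate [SFinite μ] (hk : Measurable (uncurry k)) (hF : Continuous F)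
    (ha : Measurable a) (hU : Measurable U) (m : ℕ) :
    Measurable (hammersteinIterate μ k F a U m) := by
  induction m with
  | zero => exact hU.ennreal_toReal
  | succ m ih =>
    have h_meas : Measurable fun q : X × X ↦ k q.1 q.2 * F (hammersteinIterate μ k F a U m q.2) :=
      hk.mul (hF.measurable.comp (ih.comp measurable_snd))
    exact ha.add h_meas.stronglyMeasurable.integral_prod_right'.measurable

namespace IsHammersteinSupersolution

lemma lintegral_ne_top (h : IsHammersteinSupersolution μ k F a U) {z : X} (hz : U z ≠ ∞) :
    ∫⁻ w, ENNReal.ofReal (k z w * F (U w).toReal) ∂μ ≠ ∞ :=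
  ne_top_of_le_ne_top hz (le_add_self.trans (h z))

variable (h : IsHammersteinSupersolution μ k F a U) (hU_fin : ∀ᵐ w ∂μ, U w ≠ ∞)
  (hk : Measurable (uncurry k)) (hk0 : ∀ z w, 0 ≤ k z w) (hF : Monotone F)
  (hF_abs : ∀ r, |F r| ≤ F |r|)

include hU_fin hk0 hF hF_abs

lemma lintegral_enorm_le {v : X → ℝ} (hvU : ∀ w, ‖v w‖ₑ ≤ U w) (z : X) :
    ∫⁻ w, ‖k z w * F (v w)‖ₑ ∂μ ≤ ∫⁻ w, ENNReal.ofReal (k z w * F (U w).toReal) ∂μ :=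
  lintegral_mono_ae <| hU_fin.mono fun w hw ↦ enorm_mul_apply_le hF hF_abs (hk0 z w) hw (hvU w)

include h

lemma enorm_add_integral_le {v : X → ℝ} (hvU : ∀ w, ‖v w‖ₑ ≤ U w) (z : X) :
    ‖a z + ∫ w, k z w * F (v w) ∂μ‖ₑ ≤ U z :=
  calc ‖a z + ∫ w, k z w * F (v w) ∂μ‖ₑ ≤ ‖a z‖ₑ + ‖∫ w, k z w * F (v w) ∂μ‖ₑ := enorm_add_le _ _
    _ ≤ ‖a z‖ₑ + ∫⁻ w, ENNReal.ofReal (k z w * F (U w).toReal) ∂μ := by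
        gcongr
        exact (enorm_integral_le_lintegral_enorm _).trans
          (lintegral_enorm_le hU_fin hk0 hF hF_abs hvU z)
    _ ≤ U z := h z

lemma enorm_hammersteinIterate_le (m : ℕ) (z : X) : ‖hammersteinIterate μ k F a U m z‖ₑ ≤ U z := by
  induction m generalizing z with
  | zero =>
    rw [hammersteinIterate, enorm_eq_ofReal_abs, abs_of_nonneg ENNReal.toReal_nonneg]
    exact ENNReal.ofReal_toReal_le
  | succ m ih => exact h.enorm_add_integral_le hU_fin hk0 hF hF_abs ih z

include hk

lemma integrable {v : X → ℝ} (hFc : Continuous F) (hv : Measurable v) (hvU : ∀ w, ‖v w‖ₑ ≤ U w)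
    {z : X} (hz : U z ≠ ∞) : Integrable (fun w ↦ k z w * F (v w)) μ :=
  ⟨(hk.of_uncurry_left.mul (hFc.measurable.comp hv)).aestronglyMeasurable,
    (lintegral_enorm_le hU_fin hk0 hF hF_abs hvU z).trans_lt (h.lintegral_ne_top hz).lt_top⟩

lemma hammersteinIterate_succ_le [SFinite μ] (hFc : Continuous F) (ha : Measurable a)
    (hU : Measurable U) (m : ℕ) {z : X} (hz : U z ≠ ∞) :
    hammersteinIterate μ k F a U (m + 1) z ≤ hammersteinIterate μ k F a U m z := by
  have h_bound := h.enorm_hammersteinIterate_le hU_fin hk0 hF hF_abs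
  have h_int (m : ℕ) {z : X} (hz : U z ≠ ∞) := h.integrable hU_fin hk hk0 hF hF_abs hFc
    (measurable_hammersteinIterate hk hFc ha hU m) (h_bound m) hz
  induction m generalizing z with
  | zero =>
    have h_one := h_bound 1 z
    rw [enorm_eq_ofReal_abs, ENNReal.ofReal_le_iff_le_toReal hz] at h_one
    exact (le_abs_self _).trans h_one
  | succ m ih =>
    refine add_le_add_right (integral_mono_ae (h_int (m + 1) hz) (h_int m hz) ?_) _
    filter_upwards [hU_fin] with w hw
    exact mul_le_mul_of_nonneg_left (hF (ih hw)) (hk0 z w)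

theorem exists_solution [SFinite μ] (hFc : Continuous F) (ha : Measurable a) (hU : Measurable U) :
    ∃ u : X → ℝ, Measurable u ∧ (∀ z, ‖u z‖ₑ ≤ U z) ∧ ∀ z, U z ≠ ∞ →
      Integrable (fun w ↦ k z w * F (u w)) μ ∧ u z = a z + ∫ w, k z w * F (u w) ∂μ := by
  set v := hammersteinIterate μ k F a U
  have hv : ∀ m, Measurable (v m) := measurable_hammersteinIterate hk hFc ha hU
  have h_bound : ∀ m z, ‖v m z‖ₑ ≤ U z := h.enorm_hammersteinIterate_le hU_fin hk0 hF hF_abs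
  have h_lim {z : X} (hz : U z ≠ ∞) : Tendsto (fun m ↦ v m z) atTop (𝓝 (⨅ m, v m z)) := by
    refine tendsto_atTop_ciInf (antitone_nat_of_succ_le fun m ↦
      h.hammersteinIterate_succ_le hU_fin hk hk0 hF hF_abs hFc ha hU m hz) ⟨-(U z).toReal, ?_⟩
    rintro _ ⟨m, rfl⟩
    have := h_bound m z
    rw [enorm_eq_ofReal_abs, ENNReal.ofReal_le_iff_le_toReal hz] at this
    exact neg_le_of_abs_le this
  set u : X → ℝ := fun z ↦ ⨅ m, v m z
  have hu : Measurable u := .iInf hv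
  have huU (z : X) : ‖u z‖ₑ ≤ U z := by
    by_cases hz : U z = ∞
    · exact le_top.trans_eq hz.symm
    · exact le_of_tendsto (h_lim hz).enorm (Eventually.of_forall fun m ↦ h_bound m z)
  refine ⟨u, hu, huU, fun z hz ↦ ⟨h.integrable hU_fin hk hk0 hF hF_abs hFc hu huU hz, ?_⟩⟩
  refine tendsto_nhds_unique ((tendsto_add_atTop_iff_nat 1).2 (h_lim hz)) ?_
  refine Tendsto.const_add (a z) ?_
  have h_dom : Integrable (fun w ↦ k z w * F (U w).toReal) μ :=
    h.integrable hU_fin hk hk0 hF hF_abs hFc hU.ennreal_toReal (h_bound 0) hz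
  refine tendsto_integral_of_dominated_convergence _ (fun m ↦ ((hk.of_uncurry_left (x := z)).mul
    (hFc.measurable.comp (hv m))).aestronglyMeasurable) h_dom (fun m ↦ ?_) ?_
  · filter_upwards [hU_fin] with w hw
    have h_nonneg : 0 ≤ k z w * F (U w).toReal := mul_nonneg (hk0 z w) <|
      (abs_nonneg _).trans ((hF_abs _).trans_eq (by rw [abs_of_nonneg ENNReal.toReal_nonneg]))
    have := enorm_mul_apply_le hF hF_abs (hk0 z w) hw (h_bound m w)
    rwa [enorm_eq_ofReal_abs, ENNReal.ofReal_le_ofReal_iff h_nonneg] at this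
  · filter_upwards [hU_fin] with w hw
    exact ((hFc.tendsto _).comp (h_lim hw)).const_mul _

end IsHammersteinSupersolution

end Hammerstein

section Majorant

variable {n : ℕ}

local notation "𝔼" => EuclideanSpace ℝ (Fin n)

/-- The supersolution of the Duhamel equation used for the initial datum `φ`: the linear evolution
of `|φ|`, a term absorbing the nonlinear effect of the large values of `φ`, and a constant `δ`
absorbing that of the small ones. -/
noncomputable def majorant (β δ : ℝ) (φ : 𝔼 → ℝ) (t : ℝ) (x : 𝔼) : ℝ≥0∞ :=
  heatLIntegral t (fun y ↦ ‖φ y‖ₑ) x +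
    (ENNReal.ofReal (logFac t ^ (-β)) * heatLIntegral t (logGain β φ) x + ENNReal.ofReal δ)

@[fun_prop]
lemma measurable_majorant {α : Type*} [MeasurableSpace α] {β δ : ℝ} {φ : 𝔼 → ℝ}
    (hφ : Measurable φ) {τ : α → ℝ} {ξ : α → 𝔼} (hτ : Measurable τ) (hξ : Measurable ξ) :
    Measurable fun a ↦ majorant β δ φ (τ a) (ξ a) := by
  have hL : Measurable fun a ↦ logFac (τ a) := measurable_logFac.comp hτ
  unfold majorant
  fun_prop

lemma enorm_le_mul_logGain_add {X : Type*} {β l : ℝ} (hβ : 0 ≤ β) (hl : 0 ≤ l) (φ : X → ℝ)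
    (x : X) : ‖φ x‖ₑ ≤
      ENNReal.ofReal (Real.log (exp 1 + l) ^ (-β)) * logGain β φ x + ENNReal.ofReal l := by
  rw [logGain, enorm_eq_ofReal_abs]
  rcases le_or_gt |φ x| l with h | h
  · exact le_add_left (ENNReal.ofReal_le_ofReal h)
  · refine le_add_right ?_
    have h_log : 0 < Real.log (exp 1 + l) := by
      simpa only [abs_of_nonneg hl] using one_pos.trans_le (one_le_log_exp_one_add_abs l)
    rw [← ENNReal.ofReal_mul (abs_nonneg _), ← ENNReal.ofReal_mul (by positivity)]
    refine ENNReal.ofReal_le_ofReal ?_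
    rw [rpow_neg h_log.le, ← div_eq_inv_mul, le_div_iff₀ (by positivity)]
    gcongr

lemma exists_heatLIntegral_enorm_le {β κ δ : ℝ} (hβ : 0 ≤ β) (hκ : 0 < κ) (hδ : 0 < δ) :
    ∃ C > 0, ∀ {φ : 𝔼 → ℝ}, Measurable φ → ∀ {t : ℝ}, 0 < t → ∀ x,
      heatLIntegral t (fun y ↦ ‖φ y‖ₑ) x ≤
        ENNReal.ofReal (C * logFac t ^ (-β)) * heatLIntegral t (logGain β φ) x +
          ENNReal.ofReal (δ * t ^ (-κ)) := by
  obtain ⟨c, hc, h_cmp⟩ := exists_mul_logFac_le_logFac_mul_rpow (inv_pos.2 hδ) hκ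
  refine ⟨c ^ (-β), by positivity, fun {φ} hφ {t} ht x ↦ ?_⟩
  have hL := logFac_pos ht
  have h_log : Real.log (exp 1 + δ * t ^ (-κ)) ^ (-β) ≤ c ^ (-β) * logFac t ^ (-β) := by
    have h_inv : Real.log (exp 1 + δ * t ^ (-κ)) = logFac (δ⁻¹ * t ^ κ) := by
      rw [logFac, rpow_neg ht.le, one_div, mul_inv, inv_inv]
    rw [h_inv, ← mul_rpow hc.le hL.le]
    exact rpow_le_rpow_of_nonpos (by positivity) (h_cmp t ht) (neg_nonpos.2 hβ)
  calc heatLIntegral t (fun y ↦ ‖φ y‖ₑ) x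
      ≤ heatLIntegral t (fun y ↦ ENNReal.ofReal (c ^ (-β) * logFac t ^ (-β)) * logGain β φ y +
          ENNReal.ofReal (δ * t ^ (-κ))) x := by
        refine heatLIntegral_mono (fun y ↦ ?_) x
        refine (enorm_le_mul_logGain_add hβ (l := δ * t ^ (-κ)) (by positivity) φ y).trans ?_
        gcongr
    _ = _ := by
        rw [heatLIntegral_add (by fun_prop), heatLIntegral_const_mul _ (by fun_prop),
          heatLIntegral_const ht]

lemma exists_majorant_le {β κ δ T : ℝ} (hβ : 0 ≤ β) (hκ : 0 < κ) (hδ : 0 < δ) :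
    ∃ C > 0, ∀ {φ : 𝔼 → ℝ}, Measurable φ → ∀ {t : ℝ}, 0 < t → t ≤ T → ∀ x,
      majorant β δ φ t x ≤
        ENNReal.ofReal (C * logFac t ^ (-β)) * heatLIntegral t (logGain β φ) x +
          ENNReal.ofReal (δ * (1 + T ^ κ) * t ^ (-κ)) := by
  obtain ⟨C, hC, h_lin⟩ := exists_heatLIntegral_enorm_le (n := n) hβ hκ hδ
  refine ⟨C + 1, by positivity, fun {φ} hφ {t} ht htT x ↦ ?_⟩
  have hL := logFac_pos ht
  have h_const : δ ≤ δ * T ^ κ * t ^ (-κ) := by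
    rw [mul_assoc]
    refine le_mul_of_one_le_right hδ.le ?_
    rw [rpow_neg ht.le, ← div_eq_mul_inv, one_le_div (by positivity)]
    gcongr
  calc majorant β δ φ t x
      ≤ ENNReal.ofReal (C * logFac t ^ (-β)) * heatLIntegral t (logGain β φ) x +
          ENNReal.ofReal (δ * t ^ (-κ)) +
          (ENNReal.ofReal (logFac t ^ (-β)) * heatLIntegral t (logGain β φ) x +
            ENNReal.ofReal (δ * T ^ κ * t ^ (-κ))) := by
        unfold majorant
        gcongr
        exact h_lin hφ ht x
    _ = _ := by
        rw [add_add_add_comm, ← add_mul, ← ENNReal.ofReal_add (by positivity) (by positivity),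
          ← ENNReal.ofReal_add (by positivity) (hδ.le.trans h_const)]
        ring_nf

lemma exists_logFac_rpow_mul_heatLIntegral_le (hn : 1 ≤ n) {β : ℝ} (hβn : β ≤ n / 2) :
    ∃ K > 0, ∀ {f : 𝔼 → ℝ≥0∞} {ρ C t : ℝ}, Measurable f → 0 ≤ C →
      IsZygmundBounded volume (n / 2 - β) ρ C f → 0 < t → √t ≤ ρ → ∀ x,
        ENNReal.ofReal (logFac t ^ (-β)) * heatLIntegral t f x ≤
          ENNReal.ofReal (K * C * (t ^ (-(n / 2 : ℝ)) * logFac t ^ (-(n / 2 : ℝ)))) := by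
  obtain ⟨K, hK, h_sup⟩ := exists_heatLIntegral_le_of_isZygmundBounded hn (sub_nonneg.2 hβn)
  refine ⟨K, hK, fun {f ρ C t} hfm hC hf ht htρ x ↦ ?_⟩
  have hL := logFac_pos ht
  have h_exp : logFac t ^ (-(n / 2 : ℝ)) = logFac t ^ (-β) * logFac t ^ (-(n / 2 - β)) := by
    rw [← Real.rpow_add hL]
    ring_nf
  calc ENNReal.ofReal (logFac t ^ (-β)) * heatLIntegral t f x
      ≤ ENNReal.ofReal (logFac t ^ (-β)) *
          ENNReal.ofReal (K * C * (t ^ (-(n : ℝ) / 2) * logFac t ^ (-(n / 2 - β)))) := by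
        gcongr
        exact h_sup hfm hC hf ht htρ x
    _ = _ := by
        rw [← ENNReal.ofReal_mul (by positivity), h_exp]
        ring_nf

lemma exists_majorant_le_mul_rpow_neg (hn : 1 ≤ n) {β δ T C C' : ℝ} (hβn : β ≤ n / 2)
    (hδ : 0 ≤ δ) (hT : 0 < T) (hC : 0 ≤ C) (hC' : 0 ≤ C') {φ : 𝔼 → ℝ} (hφ : Measurable φ)
    (h : IsZygmundBounded volume (n / 2) √T C (fun x ↦ ‖φ x‖ₑ))
    (hG : IsZygmundBounded volume (n / 2 - β) √T C' (logGain β φ)) :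
    ∃ K, ∀ t ∈ Ioc 0 T, ∀ x, majorant β δ φ t x ≤
      ENNReal.ofReal (K * (t ^ (-(n / 2 : ℝ)) * logFac t ^ (-(n / 2 : ℝ)))) := by
  have : (0 : ℝ) < n := by exact_mod_cast hn
  obtain ⟨K₁, hK₁, h_lin⟩ := exists_heatLIntegral_le_of_isZygmundBounded hn (γ := n / 2)
    (by positivity)
  obtain ⟨K₂, hK₂, h_gain⟩ := exists_logFac_rpow_mul_heatLIntegral_le hn hβn
  obtain ⟨K₃, hK₃, h_one⟩ := exists_one_le_mul_rpow_neg (a := n / 2) (by positivity) hT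
  refine ⟨K₁ * C + (K₂ * C' + δ * K₃), fun t ht x ↦ ?_⟩
  have ht0 : 0 < t := ht.1
  have hL := logFac_pos ht0
  have htT := Real.sqrt_le_sqrt ht.2
  rw [add_mul, add_mul (K₂ * C'), mul_assoc δ,
    ENNReal.ofReal_add (by positivity) (by positivity),
    ENNReal.ofReal_add (by positivity) (by positivity)]
  refine add_le_add ?_ (add_le_add ?_ (ENNReal.ofReal_le_ofReal ?_))
  · simpa only [neg_div] using h_lin (by fun_prop) hC h ht0 htT x
  · exact h_gain (by fun_prop) hC' hG ht0 htT x
  · exact le_mul_of_one_le_right hδ (h_one t ht)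

-- Averaging keeps `S(t)f` in the weaker Zygmund class; interpolating with the smoothing estimate
-- lets the factor `log(e + 1/t)^(-β)` restore the lost logarithms.
lemma IsZygmundBounded.exists_logFac_rpow_mul_heatLIntegral (hn : 1 ≤ n) {β ρ C : ℝ} (hβ : 0 ≤ β)
    (hβn : β ≤ n / 2) (hC : 0 ≤ C) {f : 𝔼 → ℝ≥0∞} (hfm : Measurable f)
    (hf : IsZygmundBounded volume (n / 2 - β) ρ C f) :
    ∃ K ≥ 0, ∀ {t : ℝ}, 0 < t → √t ≤ ρ → IsZygmundBounded volume (n / 2) ρ K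
      (fun x ↦ ENNReal.ofReal (logFac t ^ (-β)) * _root_.heatLIntegral t f x) := by
  have hn' : (0 : ℝ) < n := by exact_mod_cast hn
  obtain ⟨K, hK, h_interp⟩ := exists_isZygmundBounded_of_le (X := 𝔼) (α := n / 2) (β := β)
    (by positivity) hβ
  obtain ⟨K', hK', h_sup⟩ := exists_logFac_rpow_mul_heatLIntegral_le hn hβn
  obtain ⟨c, hc, h_cmp⟩ := exists_mul_logFac_le_logFac_mul_rpow (a := 1) (k := 2 / n) one_pos
    (by positivity)
  set A : ℝ := C * c ^ (-β) + K' * C * c ^ (-(n / 2 : ℝ))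
  refine ⟨K * A, by positivity, fun {t} ht htρ ↦ ?_⟩
  set τ : ℝ := t ^ (n / 2 : ℝ) with hτ
  have hτ0 : 0 < τ := by positivity
  have hLτ := logFac_pos hτ0
  have h_scale {γ : ℝ} (hγ : 0 ≤ γ) : logFac t ^ (-γ) ≤ c ^ (-γ) * logFac τ ^ (-γ) := by
    rw [← mul_rpow hc.le hLτ.le]
    refine rpow_le_rpow_of_nonpos (by positivity) ((h_cmp τ hτ0).trans_eq ?_) (neg_nonpos.2 hγ)
    rw [one_mul, hτ, ← Real.rpow_mul ht.le, div_mul_div_cancel₀' hn'.ne', div_self two_ne_zero,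
      Real.rpow_one]
  refine h_interp (by positivity) hτ0 ?_ fun x ↦ (h_sup hfm hC hf ht htρ x).trans ?_
  · refine ((hf.heatLIntegral hfm ht).const_mul (rpow_nonneg (logFac_pos ht).le _)).mono le_rfl ?_
    calc logFac t ^ (-β) * C ≤ c ^ (-β) * logFac τ ^ (-β) * C := by
          gcongr
          exact h_scale hβ
      _ = C * c ^ (-β) * logFac τ ^ (-β) := by ring
      _ ≤ A * logFac τ ^ (-β) := by
          gcongr
          exact le_add_of_nonneg_right (by positivity)
  · refine ENNReal.ofReal_le_ofReal ?_
    rw [rpow_neg ht.le]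
    calc K' * C * (τ⁻¹ * logFac t ^ (-(n / 2 : ℝ)))
        ≤ K' * C * (τ⁻¹ * (c ^ (-(n / 2 : ℝ)) * logFac τ ^ (-(n / 2 : ℝ)))) := by
          gcongr
          exact h_scale (by positivity)
      _ = K' * C * c ^ (-(n / 2 : ℝ)) * (τ⁻¹ * logFac τ ^ (-(n / 2 : ℝ))) := by ring
      _ ≤ A * (τ⁻¹ * logFac τ ^ (-(n / 2 : ℝ))) := by
          gcongr
          exact le_add_of_nonneg_left (by positivity)

lemma exists_isZygmundBounded_majorant (hn : 1 ≤ n) {β δ T C C' : ℝ} (hβ : 0 ≤ β)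
    (hβn : β ≤ n / 2) (hδ : 0 ≤ δ) (hT : 0 < T) (hC : 0 ≤ C) (hC' : 0 ≤ C') {φ : 𝔼 → ℝ}
    (hφ : Measurable φ)
    (h : IsZygmundBounded volume (n / 2) √T C (fun x ↦ ‖φ x‖ₑ))
    (hG : IsZygmundBounded volume (n / 2 - β) √T C' (logGain β φ)) :
    ∃ K, ∀ t ∈ Ioc 0 T, IsZygmundBounded volume (n / 2) √T K (majorant β δ φ t) := by
  obtain ⟨K₁, hK₁, h_gain⟩ := hG.exists_logFac_rpow_mul_heatLIntegral hn hβ hβn hC' (by fun_prop)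
  obtain ⟨v, hv, h_ball⟩ := exists_volume_ball_sqrt_eq n
  obtain ⟨K₂, hK₂, h_const⟩ := IsZygmundBounded.exists_const (X := 𝔼) (α := n / 2) (by positivity)
    (by positivity) (fun z ↦ (h_ball z hT).le) hδ
  exact ⟨C + (K₁ + K₂), fun t ht ↦ (h.heatLIntegral (by fun_prop) ht.1).add
    ((h_gain ht.1 (Real.sqrt_le_sqrt ht.2)).add h_const (by fun_prop) hK₁ hK₂) (by fun_prop) hC
    (by positivity)⟩

-- Scaling: the power `2/n` of `(t log(e + 1/t))^(-n/2)` is the critical weight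
-- `t⁻¹ log(e + 1/t)⁻¹`.
lemma rpow_one_add_two_div_le (hn : 1 ≤ n) {β C K ε t : ℝ} {g : ℝ≥0∞} (hC : 0 ≤ C) (hK : 0 ≤ K)
    (hε : 0 ≤ ε) (ht : 0 < t)
    (h : ENNReal.ofReal (C * logFac t ^ (-β)) * g ≤
      ENNReal.ofReal (C * K * ε * (t * logFac t) ^ (-(n / 2 : ℝ)))) :
    (ENNReal.ofReal (C * logFac t ^ (-β)) * g) ^ (1 + 2 / n : ℝ) ≤
      ENNReal.ofReal ((C * K) ^ (2 / n : ℝ) * C * ε ^ (2 / n : ℝ) *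
        (t⁻¹ * logFac t ^ (-(1 + β)))) * g := by
  have : (0 : ℝ) < n := by exact_mod_cast hn
  have hq : (0 : ℝ) ≤ 2 / n := by positivity
  have hL := logFac_pos ht
  have h_crit : ((t * logFac t) ^ (-(n / 2 : ℝ))) ^ (2 / n : ℝ) = t⁻¹ * (logFac t)⁻¹ := by
    rw [← Real.rpow_mul (by positivity), ← mul_inv, ← Real.rpow_neg_one]
    congr 1
    field_simp
  have h_exp : logFac t ^ (-(1 + β)) = (logFac t)⁻¹ * logFac t ^ (-β) := by
    rw [neg_add, Real.rpow_add hL, Real.rpow_neg_one]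
  set a := ENNReal.ofReal (C * logFac t ^ (-β)) * g with ha
  calc a ^ (1 + 2 / n : ℝ) = a ^ (2 / n : ℝ) * a := by
        rw [add_comm, ENNReal.rpow_add_of_nonneg _ _ hq zero_le_one, ENNReal.rpow_one]
    _ ≤ ENNReal.ofReal (C * K * ε * (t * logFac t) ^ (-(n / 2 : ℝ))) ^ (2 / n : ℝ) * a := by
        gcongr
    _ = _ := by
        rw [ENNReal.ofReal_rpow_of_nonneg (by positivity) hq, ha, ← mul_assoc,
          ← ENNReal.ofReal_mul (by positivity), mul_rpow (by positivity) (by positivity),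
          mul_rpow (x := C * K) (by positivity) hε, h_crit, h_exp]
        ring_nf

lemma exists_majorant_rpow_le (hn : 1 ≤ n) {β κ δ T : ℝ} (hβ : 0 ≤ β) (hβn : β ≤ n / 2)
    (hκ : 0 < κ) (hδ : 0 < δ) (hT : 0 ≤ T) :
    ∃ A > 0, ∀ {φ : 𝔼 → ℝ} {ρ ε t : ℝ}, Measurable φ → 0 ≤ ε →
      IsZygmundBounded volume (n / 2 - β) ρ ε (logGain β φ) → 0 < t → t ≤ T → √t ≤ ρ → ∀ x,
        majorant β δ φ t x ^ (1 + 2 / n : ℝ) ≤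
          ENNReal.ofReal (A * ε ^ (2 / n : ℝ) * (t⁻¹ * logFac t ^ (-(1 + β)))) *
            heatLIntegral t (logGain β φ) x +
          ENNReal.ofReal (2 ^ (2 / n : ℝ) * (δ * (1 + T ^ κ)) ^ (1 + 2 / n : ℝ) *
            t ^ (-(κ * (1 + 2 / n)))) := by
  have : (0 : ℝ) < n := by exact_mod_cast hn
  have hq : (0 : ℝ) ≤ 2 / n := by positivity
  obtain ⟨C, hC, h_maj⟩ := exists_majorant_le (n := n) (T := T) hβ hκ hδ
  obtain ⟨K, hK, h_sup⟩ := exists_logFac_rpow_mul_heatLIntegral_le hn hβn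
  refine ⟨2 ^ (2 / n : ℝ) * (C * K) ^ (2 / n : ℝ) * C, by positivity,
    fun {φ ρ ε t} hφ hε hG ht htT htρ x ↦ ?_⟩
  have hL := logFac_pos ht
  set a : ℝ≥0∞ := ENNReal.ofReal (C * logFac t ^ (-β)) * heatLIntegral t (logGain β φ) x with ha
  set b : ℝ := δ * (1 + T ^ κ) * t ^ (-κ) with hb
  have h_a_le : a ≤ ENNReal.ofReal (C * K * ε * (t * logFac t) ^ (-(n / 2 : ℝ))) := by
    rw [ha, ENNReal.ofReal_mul hC.le, mul_assoc, mul_rpow ht.le hL.le]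
    refine (mul_le_mul_right (h_sup (measurable_logGain hφ) hε hG ht htρ x) _).trans_eq ?_
    rw [← ENNReal.ofReal_mul hC.le]
    ring_nf
  have h_a := rpow_one_add_two_div_le hn hC.le hK.le hε ht h_a_le
  have h_b : ENNReal.ofReal b ^ (1 + 2 / n : ℝ) = ENNReal.ofReal
      ((δ * (1 + T ^ κ)) ^ (1 + 2 / n : ℝ) * t ^ (-(κ * (1 + 2 / n)))) := by
    rw [ENNReal.ofReal_rpow_of_nonneg (by positivity) (by positivity), hb,
      mul_rpow (by positivity) (by positivity), ← Real.rpow_mul ht.le, neg_mul]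
  have h_two : (2 : ℝ≥0∞) ^ (1 + 2 / n - 1 : ℝ) = ENNReal.ofReal (2 ^ (2 / n : ℝ)) := by
    rw [add_sub_cancel_left, ← ENNReal.ofReal_rpow_of_pos two_pos, ENNReal.ofReal_ofNat]
  calc majorant β δ φ t x ^ (1 + 2 / n : ℝ)
      ≤ (a + ENNReal.ofReal b) ^ (1 + 2 / n : ℝ) := by
        gcongr
        exact h_maj hφ ht htT x
    _ ≤ 2 ^ (1 + 2 / n - 1 : ℝ) * (a ^ (1 + 2 / n : ℝ) + ENNReal.ofReal b ^ (1 + 2 / n : ℝ)) :=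
        ENNReal.rpow_add_le_mul_rpow_add_rpow _ _ (le_add_of_nonneg_right hq)
    _ ≤ _ := by
        rw [h_two, mul_add, h_b, ← ENNReal.ofReal_mul (by positivity)]
        gcongr ?_ + ENNReal.ofReal ?_
        · refine (mul_le_mul_right h_a _).trans_eq ?_
          rw [← mul_assoc, ← ENNReal.ofReal_mul (by positivity)]
          ring_nf
        · rw [mul_assoc]

/-- The Duhamel integral `∫₀ᵗ S(t - s) g(s) ds` of a `[0, ∞]`-valued source. -/
noncomputable def heatPotential (g : ℝ → 𝔼 → ℝ≥0∞) (t : ℝ) (x : 𝔼) : ℝ≥0∞ :=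
  ∫⁻ s in Ioo 0 t, heatLIntegral (t - s) (g s) x

lemma heatPotential_le {g : ℝ → 𝔼 → ℝ≥0∞} {f : 𝔼 → ℝ≥0∞} {a b : ℝ → ℝ≥0∞} {t : ℝ}
    (hf : Measurable f) (ha : Measurable a)
    (hg : ∀ s ∈ Ioo 0 t, ∀ y, g s y ≤ a s * heatLIntegral s f y + b s) (x : 𝔼) :
    heatPotential g t x ≤
      (∫⁻ s in Ioo 0 t, a s) * heatLIntegral t f x + ∫⁻ s in Ioo 0 t, b s := by
  have h_slice : ∀ s ∈ Ioo 0 t,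
      heatLIntegral (t - s) (g s) x ≤ a s * heatLIntegral t f x + b s := fun s hs ↦
    calc heatLIntegral (t - s) (g s) x
        ≤ heatLIntegral (t - s) (fun y ↦ a s * heatLIntegral s f y + b s) x :=
          heatLIntegral_mono (hg s hs) x
      _ = a s * heatLIntegral t f x + b s := by
          have hts : 0 < t - s := sub_pos.2 hs.2
          rw [heatLIntegral_add (by fun_prop), heatLIntegral_const_mul _ (by fun_prop),
            heatLIntegral_const hts, heatLIntegral_heatLIntegral hf hts hs.1, sub_add_cancel]
  refine (setLIntegral_mono' measurableSet_Ioo h_slice).trans_eq ?_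
  rw [lintegral_add_left (by fun_prop), lintegral_mul_const _ ha]

lemma lintegral_mul_inv_mul_logFac_rpow_le {β A t T : ℝ} (hβ : 0 < β) (hA : 0 ≤ A) (ht : 0 < t)
    (htT : t ≤ T) (hAT : (exp 1 * T + 1) / β * A ≤ 1) :
    ∫⁻ s in Ioo 0 t, ENNReal.ofReal (A * (s⁻¹ * logFac s ^ (-(1 + β)))) ≤
      ENNReal.ofReal (logFac t ^ (-β)) := by
  have hL := logFac_pos ht
  simp_rw [ENNReal.ofReal_mul hA]
  rw [lintegral_const_mul' _ _ ENNReal.ofReal_ne_top]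
  calc ENNReal.ofReal A * ∫⁻ s in Ioo 0 t, ENNReal.ofReal (s⁻¹ * logFac s ^ (-(1 + β)))
      ≤ ENNReal.ofReal A * ENNReal.ofReal ((exp 1 * t + 1) / β * logFac t ^ (-β)) := by
        gcongr
        exact lintegral_inv_mul_logFac_rpow_le hβ ht
    _ ≤ ENNReal.ofReal (logFac t ^ (-β)) := by
        rw [← ENNReal.ofReal_mul hA, ← mul_assoc]
        refine ENNReal.ofReal_le_ofReal (mul_le_of_le_one_left (by positivity) ?_)
        calc A * ((exp 1 * t + 1) / β) ≤ A * ((exp 1 * T + 1) / β) := by gcongr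
          _ ≤ 1 := by rwa [mul_comm]

lemma lintegral_mul_rpow_neg_le {a M δ t T : ℝ} (ha : a < 1) (hM : 0 ≤ M) (ht : 0 < t) (hT : 0 < T)
    (hMT : M * (T ^ (1 - a) / (1 - a)) ≤ δ) :
    ∫⁻ s in Ioo 0 t, ENNReal.ofReal (M * s ^ (-a)) ≤
      ENNReal.ofReal (δ * (t / T) ^ (1 - a)) := by
  simp_rw [ENNReal.ofReal_mul hM]
  rw [lintegral_const_mul' _ _ ENNReal.ofReal_ne_top, lintegral_rpow_neg_Ioo ha ht,
    ← ENNReal.ofReal_mul hM]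
  refine ENNReal.ofReal_le_ofReal ?_
  calc M * (t ^ (1 - a) / (1 - a)) = M * (T ^ (1 - a) / (1 - a)) * (t / T) ^ (1 - a) := by
        rw [div_rpow ht.le hT.le]
        field_simp
    _ ≤ δ * (t / T) ^ (1 - a) := by gcongr

lemma exists_mul_rpow_le_one {K a : ℝ} (hK : 0 < K) (ha : a ≠ 0) : ∃ δ > 0, K * δ ^ a ≤ 1 := by
  refine ⟨K⁻¹ ^ (1 / a), by positivity, ?_⟩
  rw [← Real.rpow_mul (by positivity), one_div_mul_cancel ha, Real.rpow_one, mul_inv_cancel₀ hK.ne']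

-- `δ` is chosen first, against the superlinear power `1 + 2 / n`; then `ε`, depending on `δ`.
theorem exists_heatPotential_majorant_rpow_le (hn : 1 ≤ n) {β κ T : ℝ} (hβ : 0 < β)
    (hβn : β ≤ n / 2) (hκ : 0 < κ) (hκn : κ * (1 + 2 / n) < 1) (hT : 0 < T) :
    ∃ ε > 0, ∃ δ > 0, ∀ {φ : 𝔼 → ℝ} {ρ t : ℝ}, Measurable φ →
      IsZygmundBounded volume (n / 2 - β) ρ ε (logGain β φ) → 0 < t → t ≤ T → √t ≤ ρ → ∀ x,
        heatPotential (fun s y ↦ majorant β δ φ s y ^ (1 + 2 / n : ℝ)) t x ≤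
          ENNReal.ofReal (logFac t ^ (-β)) * heatLIntegral t (logGain β φ) x +
            ENNReal.ofReal (δ * (t / T) ^ (1 - κ * (1 + 2 / n))) := by
  have : (0 : ℝ) < n := by exact_mod_cast hn
  have hq : (2 / n : ℝ) ≠ 0 := by positivity
  set a := κ * (1 + 2 / n)
  have : 0 < 1 - a := sub_pos.2 hκn
  set M : ℝ := 2 ^ (2 / n : ℝ) * (1 + T ^ κ) ^ (1 + 2 / n : ℝ)
  obtain ⟨δ, hδ, hδM⟩ := exists_mul_rpow_le_one (K := M * (T ^ (1 - a) / (1 - a)))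
    (by positivity) hq
  obtain ⟨A, hA, h_pow⟩ := exists_majorant_rpow_le hn hβ.le hβn hκ hδ hT.le
  obtain ⟨ε, hε, hεA⟩ := exists_mul_rpow_le_one (K := (exp 1 * T + 1) / β * A)
    (by positivity) hq
  refine ⟨ε, hε, δ, hδ, fun {φ ρ t} hφ hG ht htT htρ x ↦ ?_⟩
  have h_pt : ∀ s ∈ Ioo 0 t, ∀ y, majorant β δ φ s y ^ (1 + 2 / n : ℝ) ≤ _ := fun s hs ↦
    h_pow hφ hε.le hG hs.1 (hs.2.le.trans htT) ((Real.sqrt_le_sqrt hs.2.le).trans htρ)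
  have h_meas : Measurable fun s ↦ ENNReal.ofReal
      (A * ε ^ (2 / n : ℝ) * (s⁻¹ * logFac s ^ (-(1 + β)))) := by
    have := measurable_logFac
    fun_prop
  refine (heatPotential_le (by fun_prop) h_meas h_pt x).trans ?_
  gcongr
  · exact lintegral_mul_inv_mul_logFac_rpow_le hβ (by positivity) ht htT (by rwa [← mul_assoc])
  · refine lintegral_mul_rpow_neg_le hκn (by positivity) ht hT ?_
    calc 2 ^ (2 / n : ℝ) * (δ * (1 + T ^ κ)) ^ (1 + 2 / n : ℝ) * (T ^ (1 - a) / (1 - a))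
        = δ * (M * (T ^ (1 - a) / (1 - a)) * δ ^ (2 / n : ℝ)) := by
          rw [mul_rpow hδ.le (by positivity), Real.rpow_add hδ, Real.rpow_one]
          ring
      _ ≤ δ := mul_le_of_le_one_right hδ.le hδM

end Majorant

section PowerNonlinearity

variable {p : ℝ}

lemma abs_abs_rpow_sub_one_mul (hp : p ≠ 0) (r : ℝ) : |(|r| ^ (p - 1) * r)| = |r| ^ p := by
  rw [abs_mul, abs_of_nonneg (rpow_nonneg (abs_nonneg r) _)]
  rcases eq_or_ne r 0 with rfl | hr
  · rw [abs_zero, mul_zero, Real.zero_rpow hp]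
  · rw [rpow_sub_one (abs_ne_zero.2 hr), div_mul_cancel₀ _ (abs_ne_zero.2 hr)]

lemma enorm_abs_rpow_sub_one_mul (hp : 0 < p) (r : ℝ) : ‖|r| ^ (p - 1) * r‖ₑ = ‖r‖ₑ ^ p := by
  rw [enorm_eq_ofReal_abs, enorm_eq_ofReal_abs, abs_abs_rpow_sub_one_mul hp.ne',
    ENNReal.ofReal_rpow_of_nonneg (abs_nonneg r) hp.le]

lemma monotone_abs_rpow_sub_one_mul (hp : 1 ≤ p) : Monotone fun r : ℝ ↦ |r| ^ (p - 1) * r := by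
  refine monotone_of_odd_of_monotoneOn_nonneg (fun r ↦ by rw [abs_neg, mul_neg]) ?_
  intro a (ha : 0 ≤ a) b (hb : 0 ≤ b) hab
  have : 0 ≤ p - 1 := sub_nonneg.2 hp
  simp only [abs_of_nonneg ha, abs_of_nonneg hb]
  gcongr

lemma continuous_abs_rpow_sub_one_mul (hp : 1 ≤ p) :
    Continuous fun r : ℝ ↦ |r| ^ (p - 1) * r :=
  (continuous_abs.rpow_const fun _ ↦ .inr (sub_nonneg.2 hp)).mul continuous_id

end PowerNonlinearity

section Duhamel

variable {n : ℕ}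

local notation "𝔼" => EuclideanSpace ℝ (Fin n)

/-- The heat evolution `S(t)φ`. -/
noncomputable def heatIntegral (t : ℝ) (φ : 𝔼 → ℝ) (x : 𝔼) : ℝ := ∫ y, heatKernel n (x - y) t * φ y

/-- The nonlinear term of the Duhamel formula, as an integral over space-time. -/
noncomputable def duhamelIntegral (p : ℝ) (u : 𝔼 → ℝ → ℝ) (t : ℝ) (x : 𝔼) : ℝ :=
  ∫ w : 𝔼 × ℝ, heatKernel n (x - w.1) (t - w.2) * (|u w.1 w.2| ^ (p - 1) * u w.1 w.2)
    ∂(volume.prod (volume.restrict (Ioo 0 t)))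

lemma enorm_heatKernel_mul (x : 𝔼) {t : ℝ} (ht : 0 ≤ t) (r : ℝ) :
    ‖heatKernel n x t * r‖ₑ = ENNReal.ofReal (heatKernel n x t) * ‖r‖ₑ := by
  rw [enorm_mul, enorm_eq_ofReal_abs (heatKernel n x t), abs_of_nonneg (heatKernel_nonneg x ht)]

lemma integrable_heatKernel_mul {t : ℝ} (ht : 0 ≤ t) {φ : 𝔼 → ℝ} (hφ : Measurable φ) {x : 𝔼}
    (h : heatLIntegral t (fun y ↦ ‖φ y‖ₑ) x ≠ ∞) :
    Integrable fun y ↦ heatKernel n (x - y) t * φ y := by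
  refine ⟨by fun_prop, ?_⟩
  simp_rw [HasFiniteIntegral, enorm_heatKernel_mul _ ht]
  exact h.lt_top

lemma enorm_heatIntegral_le {t : ℝ} (ht : 0 ≤ t) (φ : 𝔼 → ℝ) (x : 𝔼) :
    ‖heatIntegral t φ x‖ₑ ≤ heatLIntegral t (fun y ↦ ‖φ y‖ₑ) x := by
  refine (enorm_integral_le_lintegral_enorm _).trans_eq ?_
  simp_rw [enorm_heatKernel_mul _ ht, heatLIntegral]

lemma measurable_heatIntegral {φ : 𝔼 → ℝ} (hφ : Measurable φ) :
    Measurable fun z : 𝔼 × ℝ ↦ heatIntegral z.2 φ z.1 := by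
  have h_meas : Measurable fun q : (𝔼 × ℝ) × 𝔼 ↦ heatKernel n (q.1.1 - q.2) q.1.2 * φ q.2 := by
    fun_prop
  exact h_meas.stronglyMeasurable.integral_prod_right'.measurable

lemma ae_snd_mem_Ioo (t : ℝ) :
    ∀ᵐ w : 𝔼 × ℝ ∂(volume.prod (volume.restrict (Ioo 0 t))), w.2 ∈ Ioo 0 t :=
  Measure.quasiMeasurePreserving_snd.ae (ae_restrict_mem measurableSet_Ioo)

lemma lintegral_prod_heatKernel_mul {U : ℝ → 𝔼 → ℝ≥0∞} (hU : Measurable (uncurry U)) (p t : ℝ)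
    (x : 𝔼) :
    ∫⁻ w : 𝔼 × ℝ, ENNReal.ofReal (heatKernel n (x - w.1) (t - w.2)) * U w.2 w.1 ^ p
      ∂(volume.prod (volume.restrict (Ioo 0 t))) = heatPotential (fun s y ↦ U s y ^ p) t x := by
  have : Measurable fun w : 𝔼 × ℝ ↦ U w.2 w.1 := hU.comp measurable_swap
  exact lintegral_prod_symm' _ (by fun_prop)

lemma lintegral_enorm_duhamel_le {p T t : ℝ} (hp : 0 < p) {U : ℝ → 𝔼 → ℝ≥0∞}
    (hU : Measurable (uncurry U)) {u : 𝔼 → ℝ → ℝ} (huU : ∀ s ∈ Ioo 0 T, ∀ y, ‖u y s‖ₑ ≤ U s y)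
    (ht : t ≤ T) (x : 𝔼) :
    ∫⁻ w : 𝔼 × ℝ, ‖heatKernel n (x - w.1) (t - w.2) * (|u w.1 w.2| ^ (p - 1) * u w.1 w.2)‖ₑ
      ∂(volume.prod (volume.restrict (Ioo 0 t))) ≤ heatPotential (fun s y ↦ U s y ^ p) t x := by
  rw [← lintegral_prod_heatKernel_mul hU]
  refine lintegral_mono_ae ((ae_snd_mem_Ioo t).mono fun w hw ↦ ?_)
  rw [enorm_heatKernel_mul _ (sub_nonneg.2 hw.2.le), enorm_abs_rpow_sub_one_mul hp]
  gcongr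
  exact huU w.2 ⟨hw.1, hw.2.trans_le ht⟩ w.1

/-- The heat kernel as a function of two points of space-time, extended by zero to the pairs where
the source `w` is not earlier than the target `z`. -/
noncomputable def retardedHeatKernel (z w : 𝔼 × ℝ) : ℝ :=
  (univ ×ˢ Iio z.2).indicator (fun w ↦ heatKernel n (z.1 - w.1) (z.2 - w.2)) w

lemma retardedHeatKernel_nonneg (z w : 𝔼 × ℝ) : 0 ≤ retardedHeatKernel z w :=
  indicator_nonneg (fun _ hw ↦ heatKernel_nonneg _ (sub_nonneg.2 hw.2.le)) w

lemma measurable_retardedHeatKernel :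
    Measurable (uncurry (retardedHeatKernel (n := n))) := by
  have h_set : MeasurableSet {q : (𝔼 × ℝ) × 𝔼 × ℝ | q.2.2 < q.1.2} :=
    measurableSet_lt (by fun_prop) (by fun_prop)
  have h_eq : uncurry (retardedHeatKernel (n := n)) = {q | q.2.2 < q.1.2}.indicator
      fun q ↦ heatKernel n (q.1.1 - q.2.1) (q.1.2 - q.2.2) := by
    ext q
    simp only [uncurry, retardedHeatKernel, indicator, mem_prod, mem_univ, true_and, mem_Iio,
      mem_ofPred_eq]
  rw [h_eq]
  exact Measurable.indicator (by fun_prop) h_set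

lemma restrict_prod_univ_Iio {t T : ℝ} (ht : t ≤ T) :
    ((volume : Measure 𝔼).prod (volume.restrict (Ioo 0 T))).restrict (univ ×ˢ Iio t) =
      volume.prod (volume.restrict (Ioo 0 t)) := by
  rw [← Measure.prod_restrict, Measure.restrict_univ, Measure.restrict_restrict measurableSet_Iio,
    inter_comm, Ioo_inter_Iio, min_eq_right ht]

lemma retardedHeatKernel_mul (z : 𝔼 × ℝ) (g : 𝔼 × ℝ → ℝ) :
    (fun w ↦ retardedHeatKernel z w * g w) =
      (univ ×ˢ Iio z.2).indicator fun w ↦ heatKernel n (z.1 - w.1) (z.2 - w.2) * g w :=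
  funext fun _ ↦ (indicator_mul_left _ _ _).symm

lemma integral_retardedHeatKernel_mul {z : 𝔼 × ℝ} {T : ℝ} (hz : z.2 ≤ T) (g : 𝔼 × ℝ → ℝ) :
    ∫ w, retardedHeatKernel z w * g w ∂(volume.prod (volume.restrict (Ioo 0 T))) =
      ∫ w, heatKernel n (z.1 - w.1) (z.2 - w.2) * g w
        ∂(volume.prod (volume.restrict (Ioo 0 z.2))) := by
  rw [retardedHeatKernel_mul, integral_indicator (.prod .univ measurableSet_Iio),
    restrict_prod_univ_Iio hz]

lemma lintegral_enorm_retardedHeatKernel_mul {z : 𝔼 × ℝ} {T : ℝ} (hz : z.2 ≤ T)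
    (g : 𝔼 × ℝ → ℝ) :
    ∫⁻ w, ‖retardedHeatKernel z w * g w‖ₑ ∂(volume.prod (volume.restrict (Ioo 0 T))) =
      ∫⁻ w, ‖heatKernel n (z.1 - w.1) (z.2 - w.2) * g w‖ₑ
        ∂(volume.prod (volume.restrict (Ioo 0 z.2))) := by
  simp_rw [congr_fun (retardedHeatKernel_mul z g), enorm_indicator_eq_indicator_enorm]
  rw [lintegral_indicator (.prod .univ measurableSet_Iio), restrict_prod_univ_Iio hz]

/-- `U` is a supersolution of the Duhamel equation with initial datum `|φ|` and nonlinearity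
`u ^ p`. -/
def IsDuhamelSupersolution (p T : ℝ) (φ : 𝔼 → ℝ) (U : ℝ → 𝔼 → ℝ≥0∞) : Prop :=
  ∀ t ∈ Ioo 0 T, ∀ x, heatLIntegral t (fun y ↦ ‖φ y‖ₑ) x + heatPotential (fun s y ↦ U s y ^ p) t x
    ≤ U t x

/-- `u` solves the Duhamel equation at every point of `ℝⁿ × (0, T)` and is dominated by `U`. -/
structure IsDominatedSolution (p T : ℝ) (φ : 𝔼 → ℝ) (U : ℝ → 𝔼 → ℝ≥0∞) (u : 𝔼 → ℝ → ℝ) :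
    Prop where
  measurable : Measurable (uncurry u)
  enorm_le : ∀ t ∈ Ioo 0 T, ∀ x, ‖u x t‖ₑ ≤ U t x
  eq_add : ∀ t ∈ Ioo 0 T, ∀ x, u x t = heatIntegral t φ x + duhamelIntegral p u t x

namespace IsDuhamelSupersolution

variable {p T : ℝ} {φ : EuclideanSpace ℝ (Fin n) → ℝ} {U : ℝ → EuclideanSpace ℝ (Fin n) → ℝ≥0∞}
  (h : IsDuhamelSupersolution p T φ U) (hU : Measurable (uncurry U))

include h hU

lemma isHammersteinSupersolution (hp : 0 < p) :
    IsHammersteinSupersolution (volume.prod (volume.restrict (Ioo 0 T))) retardedHeatKernel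
      (fun r ↦ |r| ^ (p - 1) * r) (fun z ↦ heatIntegral z.2 φ z.1)
      (fun z ↦ if z.2 ∈ Ioo 0 T then U z.2 z.1 else ∞) := by
  intro z
  by_cases hz : z.2 ∈ Ioo 0 T
  swap
  · exact le_top.trans_eq (if_neg hz).symm
  beta_reduce
  rw [if_pos hz]
  refine le_trans (add_le_add (enorm_heatIntegral_le hz.1.le φ z.1) ?_) (h z.2 hz z.1)
  refine (lintegral_mono fun w ↦ Real.ofReal_le_enorm _).trans ?_
  rw [lintegral_enorm_retardedHeatKernel_mul hz.2.le]
  refine lintegral_enorm_duhamel_le (T := T) hp hU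
    (u := fun y s ↦ (if s ∈ Ioo 0 T then U s y else ∞).toReal) (fun s hs y ↦ ?_) hz.2.le z.1
  rw [if_pos hs]
  rw [enorm_eq_ofReal_abs, abs_of_nonneg ENNReal.toReal_nonneg]
  exact ENNReal.ofReal_toReal_le

theorem exists_isDominatedSolution (hp : 1 ≤ p) (hU_fin : ∀ t ∈ Ioo 0 T, ∀ x, U t x ≠ ∞)
    (hφ : Measurable φ) : ∃ u, IsDominatedSolution p T φ U u := by
  have hU' : Measurable fun z : 𝔼 × ℝ ↦ if z.2 ∈ Ioo 0 T then U z.2 z.1 else ∞ :=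
    (hU.comp measurable_swap).ite (measurable_snd measurableSet_Ioo) measurable_const
  have hF_abs (r : ℝ) : |(|r| ^ (p - 1) * r)| ≤ |(|r|)| ^ (p - 1) * |r| := by
    rw [abs_mul, abs_of_nonneg (rpow_nonneg (abs_nonneg r) _), abs_abs]
  have hU'_fin : ∀ᵐ w : 𝔼 × ℝ ∂(volume.prod (volume.restrict (Ioo 0 T))),
      (if w.2 ∈ Ioo 0 T then U w.2 w.1 else ∞) ≠ ∞ :=
    (ae_snd_mem_Ioo T).mono fun w hw ↦ by
      rw [if_pos hw]
      exact hU_fin w.2 hw w.1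
  obtain ⟨u, hu, huU, hu_eq⟩ :=
    (h.isHammersteinSupersolution hU (one_pos.trans_le hp)).exists_solution hU'_fin
      measurable_retardedHeatKernel retardedHeatKernel_nonneg (monotone_abs_rpow_sub_one_mul hp)
      hF_abs (continuous_abs_rpow_sub_one_mul hp) (measurable_heatIntegral hφ) hU'
  refine ⟨fun x t ↦ u (x, t), hu, fun t ht x ↦ ?_, fun t ht x ↦ ?_⟩
  · simpa only [if_pos ht] using huU (x, t)
  · refine (hu_eq (x, t) (by simpa only [if_pos ht] using hU_fin t ht x)).2.trans ?_
    rw [integral_retardedHeatKernel_mul ht.2.le]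
    rfl

end IsDuhamelSupersolution

namespace IsDominatedSolution

variable {p T : ℝ} {φ : EuclideanSpace ℝ (Fin n) → ℝ} {U : ℝ → EuclideanSpace ℝ (Fin n) → ℝ≥0∞}
  {u : EuclideanSpace ℝ (Fin n) → ℝ → ℝ} (hu : IsDominatedSolution p T φ U u)

include hu

lemma enorm_duhamelIntegral_le (hp : 0 < p) (hU : Measurable (uncurry U)) {t : ℝ} (ht : t ≤ T)
    (x : 𝔼) : ‖duhamelIntegral p u t x‖ₑ ≤ heatPotential (fun s y ↦ U s y ^ p) t x :=
  (enorm_integral_le_lintegral_enorm _).trans (lintegral_enorm_duhamel_le hp hU hu.enorm_le ht x)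

lemma isSolution (hp : 0 < p) (h : IsDuhamelSupersolution p T φ U) (hU : Measurable (uncurry U))
    (hU_fin : ∀ t ∈ Ioo 0 T, ∀ x, U t x ≠ ∞) (hφ : Measurable φ) : IsSolution n p T φ u := by
  refine ⟨hu.measurable, (ae_snd_mem_Ioo T).mono fun z hz ↦ ?_⟩
  have h_fin := (h z.2 hz z.1).trans_lt (hU_fin z.2 hz z.1).lt_top
  have h_int : Integrable (fun w : 𝔼 × ℝ ↦
      heatKernel n (z.1 - w.1) (z.2 - w.2) * (|u w.1 w.2| ^ (p - 1) * u w.1 w.2))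
      (volume.prod (volume.restrict (Ioo 0 z.2))) := by
    have : Measurable fun w : 𝔼 × ℝ ↦ u w.1 w.2 := hu.measurable
    exact ⟨by fun_prop, (lintegral_enorm_duhamel_le hp hU hu.enorm_le hz.2.le z.1).trans_lt
      (le_add_self.trans_lt h_fin)⟩
  refine ⟨integrable_heatKernel_mul hz.1.le hφ (le_self_add.trans_lt h_fin).ne, h_int, ?_⟩
  rw [← integral_prod_symm _ h_int]
  exact hu.eq_add z.2 hz z.1

end IsDominatedSolution

lemma IsSolution.congr_ae {p T : ℝ} {φ ψ : 𝔼 → ℝ} {u : 𝔼 → ℝ → ℝ} (h : IsSolution n p T φ u)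
    (hφψ : φ =ᵐ[volume] ψ) : IsSolution n p T ψ u := by
  refine ⟨h.1, h.2.mono fun z hz ↦ ?_⟩
  have h_congr : (fun y ↦ heatKernel n (z.1 - y) z.2 * φ y) =ᵐ[volume]
      fun y ↦ heatKernel n (z.1 - y) z.2 * ψ y := hφψ.mono fun y hy ↦ by simp only [hy]
  rw [← integrable_congr h_congr, ← integral_congr_ae h_congr]
  exact hz

end Duhamel

section TestFunctions

variable {X : Type*} [TopologicalSpace X] [MeasurableSpace X] [OpensMeasurableSpace X]
  {μ : Measure X} {η : X → ℝ}

lemma exists_lintegral_mul_enorm_le (hηc : Continuous η) (hη : HasCompactSupport η) :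
    ∃ M : ℝ, ∀ f : X → ℝ≥0∞,
      ∫⁻ x, f x * ‖η x‖ₑ ∂μ ≤ ENNReal.ofReal M * ∫⁻ x in tsupport η, f x ∂μ := by
  obtain ⟨M, hM⟩ := hη.exists_bound_of_continuous hηc
  refine ⟨M, fun f ↦ ?_⟩
  rw [← lintegral_const_mul' _ _ ENNReal.ofReal_ne_top,
    ← lintegral_indicator (isClosed_tsupport η).measurableSet]
  refine lintegral_mono fun x ↦ ?_
  by_cases hx : x ∈ tsupport η
  · rw [indicator_of_mem hx, mul_comm, enorm_eq_ofReal_abs]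
    gcongr
    exact hM x
  · rw [image_eq_zero_of_notMem_tsupport hx, enorm_zero, mul_zero]
    exact zero_le

lemma integrable_mul_of_setLIntegral_ne_top (hηc : Continuous η) (hη : HasCompactSupport η)
    {f : X → ℝ} (hf : Measurable f) (h : ∫⁻ x in tsupport η, ‖f x‖ₑ ∂μ ≠ ∞) :
    Integrable (fun x ↦ f x * η x) μ := by
  obtain ⟨M, hM⟩ := exists_lintegral_mul_enorm_le (μ := μ) hηc hη
  refine ⟨(hf.mul hηc.measurable).aestronglyMeasurable, ?_⟩
  simp_rw [HasFiniteIntegral, enorm_mul]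
  exact (hM _).trans_lt (ENNReal.mul_lt_top ENNReal.ofReal_lt_top h.lt_top)

lemma tendsto_integral_mul_zero (hηc : Continuous η) (hη : HasCompactSupport η) {ι : Type*}
    {l : Filter ι} {f : ι → X → ℝ}
    (h : Tendsto (fun i ↦ ∫⁻ x in tsupport η, ‖f i x‖ₑ ∂μ) l (𝓝 0)) :
    Tendsto (fun i ↦ ∫ x, f i x * η x ∂μ) l (𝓝 0) := by
  obtain ⟨M, hM⟩ := exists_lintegral_mul_enorm_le (μ := μ) hηc hη
  rw [tendsto_zero_iff_enorm_tendsto_zero]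
  have h_lim := ENNReal.Tendsto.const_mul h (.inr (ENNReal.ofReal_ne_top (r := M)))
  rw [mul_zero] at h_lim
  refine tendsto_of_tendsto_of_tendsto_of_le_of_le tendsto_const_nhds h_lim
    (fun _ ↦ zero_le) fun i ↦ ?_
  refine (enorm_integral_le_lintegral_enorm _).trans ?_
  simp_rw [enorm_mul]
  exact hM _

end TestFunctions

section InitialTrace

variable {n : ℕ}

local notation "𝔼" => EuclideanSpace ℝ (Fin n)

lemma sqrt_pow_mul_heatKernel_sqrt_smul {t : ℝ} (ht : 0 < t) (v : 𝔼) :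
    √t ^ n * heatKernel n (√t • v) t = heatKernel n v 1 := by
  have h_norm : -‖√t • v‖ ^ 2 / (4 * t) = -‖v‖ ^ 2 / (4 * 1) := by
    rw [norm_smul, mul_pow, Real.norm_eq_abs, sq_abs, Real.sq_sqrt ht.le]
    field_simp
  have h_sqrt : √t ^ n = t ^ (n / 2 : ℝ) := by
    rw [Real.sqrt_eq_rpow, ← Real.rpow_mul_natCast ht.le, one_div_mul_eq_div]
  rw [heatKernel, heatKernel, h_norm, h_sqrt, mul_rpow (by positivity) ht.le, mul_one, neg_div,
    rpow_neg ht.le]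
  field_simp

lemma integral_heatKernel_mul_eq {t : ℝ} (ht : 0 < t) (f : 𝔼 → ℝ) :
    ∫ w, heatKernel n w t * f w = ∫ v, heatKernel n v 1 * f (√t • v) := by
  have h_scale := Measure.integral_comp_smul (volume : Measure 𝔼)
    (fun w ↦ heatKernel n w t * f w) √t
  rw [finrank_euclideanSpace_fin, abs_of_pos (by positivity), smul_eq_mul, eq_comm,
    inv_mul_eq_iff_eq_mul₀ (by positivity), ← integral_const_mul] at h_scale
  simp_rw [h_scale, ← mul_assoc, sqrt_pow_mul_heatKernel_sqrt_smul ht]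

lemma tendsto_integral_heatKernel_mul {f : 𝔼 → ℝ} (hf : Continuous f) {M : ℝ}
    (hM : ∀ w, |f w| ≤ M) :
    Tendsto (fun t ↦ ∫ w, heatKernel n w t * f w) (𝓝[>] 0) (𝓝 (f 0)) := by
  have h_lim : Tendsto (fun t ↦ ∫ v, heatKernel n v 1 * f (√t • v)) (𝓝[>] 0)
      (𝓝 (∫ v, heatKernel n v 1 * f 0)) := by
    refine tendsto_integral_filter_of_dominated_convergence (fun v ↦ heatKernel n v 1 * M)
      (.of_forall fun t ↦ ?_) (.of_forall fun t ↦ .of_forall fun v ↦ ?_)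
      ((integrable_heatKernel one_pos).mul_const _) (.of_forall fun v ↦ ?_)
    · have : Measurable f := hf.measurable
      exact Measurable.aestronglyMeasurable (by fun_prop)
    · have h_nonneg := heatKernel_nonneg v zero_le_one
      rw [norm_mul, Real.norm_of_nonneg h_nonneg]
      exact mul_le_mul_of_nonneg_left (hM _) h_nonneg
    · have h_cont : Continuous fun t : ℝ ↦ heatKernel n v 1 * f (√t • v) := by fun_prop
      simpa only [Real.sqrt_zero, zero_smul] using
        (h_cont.tendsto 0).mono_left nhdsWithin_le_nhds
  rw [integral_mul_const, integral_heatKernel one_pos, one_mul] at h_lim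
  refine h_lim.congr' ?_
  filter_upwards [self_mem_nhdsWithin] with t ht
  exact (integral_heatKernel_mul_eq ht f).symm

lemma continuous_integral_comp_sub_mul {φ η : 𝔼 → ℝ} (hφ : LocallyIntegrable φ volume)
    (hηc : Continuous η) (hη : HasCompactSupport η) :
    Continuous fun w ↦ ∫ x, φ (x - w) * η x := by
  have h_conv := (hη.comp_homeomorph (Homeomorph.neg _)).continuous_convolution_right
    (ContinuousLinearMap.mul ℝ ℝ) hφ (hηc.comp continuous_neg)
  refine (h_conv.comp continuous_neg).congr fun w ↦ ?_
  rw [comp_apply, convolution, ← integral_sub_right_eq_self _ w]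
  refine integral_congr_ae (.of_forall fun x ↦ ?_)
  simp only [ContinuousLinearMap.mul_apply', comp_apply, Homeomorph.coe_neg, neg_sub,
    sub_neg_eq_add, sub_add_cancel]

lemma integrable_heatKernel_mul_comp_sub_mul {φ η : 𝔼 → ℝ} (hφ : Measurable φ)
    (hη : Measurable η) {M : ℝ} (hφη : ∀ w, ∫⁻ x, ‖φ (x - w)‖ₑ * ‖η x‖ₑ ≤ ENNReal.ofReal M)
    {t : ℝ} (ht : 0 < t) :
    Integrable (uncurry fun x w : 𝔼 ↦ heatKernel n w t * (φ (x - w) * η x))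
      (volume.prod volume) := by
  have h_meas : Measurable (uncurry fun x w : 𝔼 ↦ heatKernel n w t * (φ (x - w) * η x)) := by
    fun_prop
  refine ⟨h_meas.aestronglyMeasurable, ?_⟩
  rw [HasFiniteIntegral, lintegral_prod_symm' _ h_meas.enorm]
  simp_rw [uncurry, enorm_heatKernel_mul _ ht.le, enorm_mul]
  calc ∫⁻ w, ∫⁻ x, ENNReal.ofReal (heatKernel n w t) * (‖φ (x - w)‖ₑ * ‖η x‖ₑ)
      ≤ ∫⁻ w, ENNReal.ofReal (heatKernel n w t) * ENNReal.ofReal M := by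
        refine lintegral_mono fun w ↦ ?_
        rw [lintegral_const_mul' _ _ ENNReal.ofReal_ne_top]
        gcongr
        exact hφη w
    _ = ENNReal.ofReal M := by
        rw [lintegral_mul_const' _ _ ENNReal.ofReal_ne_top, lintegral_heatKernel ht, one_mul]
    _ < ∞ := ENNReal.ofReal_lt_top

lemma heatIntegral_mul (t : ℝ) (φ η : 𝔼 → ℝ) (x : 𝔼) :
    heatIntegral t φ x * η x = ∫ w, heatKernel n w t * (φ (x - w) * η x) := by
  rw [heatIntegral, ← integral_sub_left_eq_self _ volume x, ← integral_mul_const]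
  simp_rw [_root_.sub_sub_cancel, mul_assoc]

-- By Fubini the pairing is the heat average at the origin of the continuous function
-- `w ↦ ∫ x, φ (x - w) * η x`.
theorem tendsto_integral_heatIntegral_mul {φ η : 𝔼 → ℝ} (hφ : Measurable φ)
    (hφl : LocallyIntegrable φ volume) (hηc : Continuous η) (hη : HasCompactSupport η) {M : ℝ}
    (hφη : ∀ w, ∫⁻ x, ‖φ (x - w)‖ₑ * ‖η x‖ₑ ≤ ENNReal.ofReal M) :
    Tendsto (fun t ↦ ∫ x, heatIntegral t φ x * η x) (𝓝[>] 0) (𝓝 (∫ x, φ x * η x)) := by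
  have h_abs (w : 𝔼) : |∫ x, φ (x - w) * η x| ≤ max M 0 := by
    rw [← ENNReal.ofReal_le_ofReal_iff (le_max_right M 0), ← enorm_eq_ofReal_abs]
    refine (enorm_integral_le_lintegral_enorm _).trans ?_
    simp_rw [enorm_mul]
    exact (hφη w).trans (ENNReal.ofReal_le_ofReal (le_max_left M 0))
  have h_lim := tendsto_integral_heatKernel_mul (continuous_integral_comp_sub_mul hφl hηc hη) h_abs
  simp only [sub_zero] at h_lim
  refine h_lim.congr' ?_
  filter_upwards [self_mem_nhdsWithin] with t ht
  simp_rw [heatIntegral_mul, ← integral_const_mul]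
  exact (integral_integral_swap
    (integrable_heatKernel_mul_comp_sub_mul hφ hηc.measurable hφη ht)).symm

lemma integrable_heatIntegral_mul {φ η : 𝔼 → ℝ} (hφ : Measurable φ) (hη : Measurable η) {M : ℝ}
    (hφη : ∀ w, ∫⁻ x, ‖φ (x - w)‖ₑ * ‖η x‖ₑ ≤ ENNReal.ofReal M) {t : ℝ} (ht : 0 < t) :
    Integrable fun x ↦ heatIntegral t φ x * η x := by
  simp_rw [heatIntegral_mul]
  exact (integrable_heatKernel_mul_comp_sub_mul hφ hη hφη ht).integral_prod_left

lemma exists_setLIntegral_le_of_isZygmundBounded_sqrt (γ C : ℝ) {T : ℝ} (hT : 0 < T) {K : Set 𝔼}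
    (hK : IsCompact K) :
    ∃ M : ℝ, ∀ f, IsZygmundBounded volume γ √T C f → ∫⁻ x in K, f x ≤ ENNReal.ofReal M := by
  obtain ⟨v, hv, h_ball⟩ := exists_volume_ball_sqrt_eq n
  exact IsZygmundBounded.exists_setLIntegral_le_of_isCompact γ C (Real.sqrt_pos.2 hT)
    (V := v * T ^ (n / 2 : ℝ)) (by positivity) (fun z ↦ (h_ball z hT).le) hK

lemma exists_lintegral_enorm_comp_sub_mul_le {γ C T : ℝ} (hT : 0 < T) {φ η : 𝔼 → ℝ}
    (h : IsZygmundBounded volume γ √T C (fun x ↦ ‖φ x‖ₑ)) (hηc : Continuous η)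
    (hη : HasCompactSupport η) :
    ∃ M : ℝ, ∀ w, ∫⁻ x, ‖φ (x - w)‖ₑ * ‖η x‖ₑ ≤ ENNReal.ofReal M := by
  obtain ⟨A, hA⟩ := exists_lintegral_mul_enorm_le (μ := volume) hηc hη
  obtain ⟨B, hB⟩ := exists_setLIntegral_le_of_isZygmundBounded_sqrt γ C hT hη.isCompact
  refine ⟨(ENNReal.ofReal A * ENNReal.ofReal B).toReal, fun w ↦ ?_⟩
  rw [ENNReal.ofReal_toReal (by finiteness)]
  refine (hA fun x ↦ ‖φ (x - w)‖ₑ).trans ?_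
  gcongr
  exact hB _ (h.comp_sub_right w)

lemma tendsto_setLIntegral_zero {γ β κ δ C S T : ℝ} (hβ : 0 < β) (hκ : 0 < κ) (hT : 0 < T)
    {G : 𝔼 → ℝ≥0∞} (hGm : Measurable G) (hG : IsZygmundBounded volume γ √T C G) {K : Set 𝔼}
    (hK : IsCompact K) {f : ℝ → 𝔼 → ℝ≥0∞}
    (hf : ∀ t ∈ Ioo 0 T, ∀ x, f t x ≤ ENNReal.ofReal (logFac t ^ (-β)) * heatLIntegral t G x +
      ENNReal.ofReal (δ * (t / S) ^ κ)) :
    Tendsto (fun t ↦ ∫⁻ x in K, f t x) (𝓝[>] 0) (𝓝 0) := by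
  obtain ⟨M, hM⟩ := exists_setLIntegral_le_of_isZygmundBounded_sqrt γ C hT hK
  have h_log := ENNReal.Tendsto.mul_const (b := ENNReal.ofReal M)
    (ENNReal.tendsto_ofReal (tendsto_logFac_rpow_neg_nhdsGT_zero hβ)) (.inr ENNReal.ofReal_ne_top)
  have h_pow : Tendsto (fun t ↦ δ * (t / S) ^ κ) (𝓝[>] 0) (𝓝 0) := by
    have h_cont : Continuous fun t ↦ δ * (t / S) ^ κ :=
      continuous_const.mul ((continuous_id.div_const S).rpow_const fun _ ↦ .inr hκ.le)
    simpa only [zero_div, Real.zero_rpow hκ.ne', mul_zero] using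
      (h_cont.tendsto 0).mono_left nhdsWithin_le_nhds
  have h_const := ENNReal.Tendsto.mul_const (b := volume K) (ENNReal.tendsto_ofReal h_pow)
    (.inr hK.measure_lt_top.ne)
  have h_lim := h_log.add h_const
  rw [ENNReal.ofReal_zero, zero_mul, zero_mul, add_zero] at h_lim
  refine tendsto_of_tendsto_of_tendsto_of_le_of_le' tendsto_const_nhds h_lim
    (.of_forall fun _ ↦ zero_le) ?_
  filter_upwards [Ioo_mem_nhdsGT hT] with t ht
  refine (lintegral_mono (hf t ht)).trans ?_
  rw [lintegral_add_right _ measurable_const, setLIntegral_const,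
    lintegral_const_mul _ (by fun_prop)]
  gcongr
  exact hM _ (hG.heatLIntegral hGm ht.1)

end InitialTrace

section SmallData

variable {n : ℕ}

local notation "𝔼" => EuclideanSpace ℝ (Fin n)

lemma exists_isZygmundBounded_logGain {X : Type*} [PseudoMetricSpace X] [MeasurableSpace X]
    (μ : Measure X) {α β ε : ℝ} (hβ : 0 ≤ β) (hβα : β < α) (hε : 0 < ε) :
    ∃ ε₀ > 0, ∀ {φ : X → ℝ} {ρ : ℝ}, Measurable φ →
      IsZygmundBounded μ α ρ ε₀ (fun x ↦ ‖φ x‖ₑ) →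
        IsZygmundBounded μ (α - β) ρ ε (logGain β φ) := by
  have h_geom : 0 < 1 - (2 : ℝ) ^ (β - α) :=
    sub_pos.2 (rpow_lt_one_of_one_lt_of_neg one_lt_two (sub_neg.2 hβα))
  set c : ℝ := 1 + 2 ^ β * (1 - 2 ^ (β - α))⁻¹
  have hc : 0 < c := by positivity
  refine ⟨min 1 (ε / c), by positivity, fun hφ h ↦ ?_⟩
  refine (h.logGain hφ hβ hβα (by positivity) (min_le_left _ _)).mono le_rfl ?_
  rw [← le_div_iff₀' hc]
  exact min_le_right _ _

theorem exists_heatPotential_majorant_rpow_le_of_isZygmundBounded (hn : 1 ≤ n) {β κ S : ℝ}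
    (hβ : 0 < β) (hβn : β < n / 2) (hκ : 0 < κ) (hκn : κ * (1 + 2 / n) < 1) (hS : 0 < S) :
    ∃ ε₀ > 0, ∃ δ > 0, ∃ C ≥ 0, ∀ {φ : 𝔼 → ℝ} {T : ℝ}, Measurable φ → T ≤ S →
      IsZygmundBounded volume (n / 2) √T ε₀ (fun x ↦ ‖φ x‖ₑ) →
        IsZygmundBounded volume (n / 2 - β) √T C (logGain β φ) ∧
        ∀ t ∈ Ioo 0 T, ∀ x, heatPotential (fun s y ↦ majorant β δ φ s y ^ (1 + 2 / n : ℝ)) t x ≤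
          ENNReal.ofReal (logFac t ^ (-β)) * heatLIntegral t (logGain β φ) x +
            ENNReal.ofReal (δ * (t / S) ^ (1 - κ * (1 + 2 / n))) := by
  obtain ⟨ε, hε, δ, hδ, h_pot⟩ :=
    exists_heatPotential_majorant_rpow_le hn hβ hβn.le hκ hκn hS
  obtain ⟨ε₀, hε₀, h_gain⟩ := exists_isZygmundBounded_logGain (X := 𝔼) volume hβ.le hβn hε
  refine ⟨ε₀, hε₀, δ, hδ, ε, hε.le, fun hφ hTS h ↦ ⟨h_gain hφ h, fun t ht x ↦ ?_⟩⟩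
  exact h_pot hφ (h_gain hφ h) ht.1 (ht.2.le.trans hTS) (Real.sqrt_le_sqrt ht.2.le) x

lemma isDuhamelSupersolution_majorant {p β δ κ S T : ℝ} (hδ : 0 ≤ δ) (hκ : 0 ≤ κ) (hTS : T ≤ S)
    {φ : 𝔼 → ℝ}
    (h : ∀ t ∈ Ioo 0 T, ∀ x, heatPotential (fun s y ↦ majorant β δ φ s y ^ p) t x ≤
      ENNReal.ofReal (logFac t ^ (-β)) * heatLIntegral t (logGain β φ) x +
        ENNReal.ofReal (δ * (t / S) ^ κ)) :
    IsDuhamelSupersolution p T φ (majorant β δ φ) := by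
  intro t ht x
  have hS : 0 < S := ht.1.trans (ht.2.trans_le hTS)
  have h_pow : (t / S) ^ κ ≤ 1 := rpow_le_one (div_nonneg ht.1.le hS.le)
    (div_le_one_of_le₀ (ht.2.le.trans hTS) hS.le) hκ
  unfold majorant
  gcongr
  refine (h t ht x).trans ?_
  gcongr
  exact mul_le_of_le_one_right hδ h_pow

theorem exists_isDuhamelSupersolution (hn : 1 ≤ n) {S : ℝ} (hS : 0 < S) :
    ∃ ε > 0, ∀ {φ : 𝔼 → ℝ} {T : ℝ}, Measurable φ → 0 < T → T ≤ S →
      IsZygmundBounded volume (n / 2) √T ε (fun x ↦ ‖φ x‖ₑ) →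
        ∃ U : ℝ → 𝔼 → ℝ≥0∞, Measurable (uncurry U) ∧ IsDuhamelSupersolution (1 + 2 / n) T φ U ∧
          (∃ K, ∀ t ∈ Ioc 0 T, IsZygmundBounded volume (n / 2) √T K (U t)) ∧
          (∃ K, ∀ t ∈ Ioc 0 T, ∀ x,
            U t x ≤ ENNReal.ofReal (K * (t ^ (-(n / 2 : ℝ)) * logFac t ^ (-(n / 2 : ℝ))))) ∧
          ∀ K, IsCompact K → Tendsto
            (fun t ↦ ∫⁻ x in K, heatPotential (fun s y ↦ U s y ^ (1 + 2 / n : ℝ)) t x)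
              (𝓝[>] 0) (𝓝 0) := by
  have hn' : (1 : ℝ) ≤ n := by exact_mod_cast hn
  have hβ : (1 / 4 : ℝ) < n / 2 := by linarith
  have hκ : (1 / 4 : ℝ) * (1 + 2 / n) < 1 := by
    have : (2 / n : ℝ) ≤ 2 := div_le_self zero_le_two hn'
    linarith
  obtain ⟨ε, hε, δ, hδ, C, hC, h_small⟩ :=
    exists_heatPotential_majorant_rpow_le_of_isZygmundBounded hn (by positivity) hβ
      (by positivity) hκ hS
  refine ⟨ε, hε, fun {φ T} hφ hT hTS h ↦ ?_⟩
  obtain ⟨hG, h_pot⟩ := h_small hφ hTS h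
  exact ⟨majorant (1 / 4) δ φ, measurable_majorant hφ measurable_fst measurable_snd,
    isDuhamelSupersolution_majorant hδ.le (sub_pos.2 hκ).le hTS h_pot,
    exists_isZygmundBounded_majorant hn (by positivity) hβ.le hδ.le hT hε.le hC hφ h hG,
    exists_majorant_le_mul_rpow_neg hn hβ.le hδ.le hT hε.le hC hφ h hG,
    fun K hK ↦ tendsto_setLIntegral_zero (by positivity) (sub_pos.2 hκ) hT (by fun_prop) hG hK
      h_pot⟩

namespace IsDominatedSolution

variable {p T K : ℝ} {φ : EuclideanSpace ℝ (Fin n) → ℝ} {U : ℝ → EuclideanSpace ℝ (Fin n) → ℝ≥0∞}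
  {u : EuclideanSpace ℝ (Fin n) → ℝ → ℝ} (hu : IsDominatedSolution p T φ U u)

include hu

lemma iSup_zygNormUL_lt_top {α ρ : ℝ} (hU : ∀ t ∈ Ioc 0 T, IsZygmundBounded volume α ρ K (U t)) :
    (⨆ t : Ioo (0 : ℝ) T, zygNormUL n 1 α ρ (fun x ↦ u x t.1)) < ∞ :=
  (iSup_le fun ⟨t, ht⟩ ↦
    (hU t (Ioo_subset_Ioc_self ht)).zygNormUL_le (hu.enorm_le t ht)).trans_lt ENNReal.ofReal_lt_top

lemma iSup_mul_eLpNorm_top_lt_top {a : ℝ}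
    (hU : ∀ t ∈ Ioc 0 T, ∀ x, U t x ≤ ENNReal.ofReal (K * (t ^ (-a) * logFac t ^ (-a)))) :
    (⨆ t : Ioo (0 : ℝ) T, ENNReal.ofReal (t.1 ^ a * logFac t.1 ^ a) *
      eLpNorm (fun x ↦ u x t.1) ∞ volume) < ∞ := by
  refine (iSup_le fun ⟨t, ht⟩ ↦ ?_).trans_lt (ENNReal.ofReal_lt_top (r := K))
  have ht0 := ht.1
  have hL := logFac_pos ht0
  have h_sup : eLpNorm (fun x ↦ u x t) ∞ volume ≤
      ENNReal.ofReal (K * (t ^ (-a) * logFac t ^ (-a))) := by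
    rw [eLpNorm_exponent_top]
    exact eLpNormEssSup_le_of_ae_enorm_bound (.of_forall fun x ↦
      (hu.enorm_le t ht x).trans (hU t (Ioo_subset_Ioc_self ht) x))
  refine (mul_le_mul_right h_sup _).trans_eq ?_
  rw [← ENNReal.ofReal_mul (by positivity), rpow_neg ht0.le, rpow_neg hL.le]
  congr 1
  field_simp

theorem tendsto_integral_mul {γ C : ℝ} (hp : 0 < p) (hU : Measurable (uncurry U)) (hT : 0 < T)
    (hφ : Measurable φ) (hφl : LocallyIntegrable φ volume)
    (h : IsZygmundBounded volume γ √T C (fun x ↦ ‖φ x‖ₑ)) {η : 𝔼 → ℝ} (hηc : Continuous η)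
    (hη : HasCompactSupport η)
    (h_pot : Tendsto (fun t ↦ ∫⁻ x in tsupport η, heatPotential (fun s y ↦ U s y ^ p) t x)
      (𝓝[>] 0) (𝓝 0)) :
    Tendsto (fun t ↦ ∫ x, u x t * η x) (𝓝[>] 0) (𝓝 (∫ x, φ x * η x)) := by
  obtain ⟨M, hM⟩ := exists_lintegral_enorm_comp_sub_mul_le hT h hηc hη
  have h_zero : Tendsto (fun t ↦ ∫⁻ x in tsupport η, ‖duhamelIntegral p u t x‖ₑ) (𝓝[>] 0)
      (𝓝 0) := by
    refine tendsto_of_tendsto_of_tendsto_of_le_of_le' tendsto_const_nhds h_pot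
      (.of_forall fun _ ↦ zero_le) ?_
    filter_upwards [Ioo_mem_nhdsGT hT] with t ht
    exact lintegral_mono (hu.enorm_duhamelIntegral_le hp hU ht.2.le)
  have h_lim := (tendsto_integral_heatIntegral_mul hφ hφl hηc hη hM).add
    (tendsto_integral_mul_zero hηc hη h_zero)
  rw [add_zero] at h_lim
  refine h_lim.congr' ?_
  filter_upwards [Ioo_mem_nhdsGT hT, h_zero.eventually_lt_const ENNReal.zero_lt_top] with t ht h_fin
  have h_meas : Measurable (duhamelIntegral p u t) := by
    have h_u : Measurable fun x ↦ u x t := hu.measurable.comp measurable_prodMk_right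
    convert h_u.sub ((measurable_heatIntegral hφ).comp measurable_prodMk_right) using 1
    exact funext fun x ↦ eq_sub_of_add_eq' (hu.eq_add t ht x).symm
  rw [← integral_add (integrable_heatIntegral_mul hφ hηc.measurable hM ht.1)
    (integrable_mul_of_setLIntegral_ne_top hηc hη h_meas h_fin.ne)]
  simp_rw [hu.eq_add t ht, add_mul]

end IsDominatedSolution

end SmallData

theorem stmt0 (n : ℕ) (hn : 1 ≤ n) (p : ℝ) (hp : p = 1 + 2 / n)
    (Tstar : ℝ) (hTstar : 0 < Tstar) :
    ∃ ε > (0 : ℝ), ∀ φ : EuclideanSpace ℝ (Fin n) → ℝ,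
      LocallyIntegrable φ volume →
      ∀ T : ℝ, 0 < T → T ≤ Tstar →
        zygNormUL n 1 ((n : ℝ) / 2) (T ^ ((1 : ℝ) / 2)) φ ≤ ENNReal.ofReal ε →
        ∃ u : EuclideanSpace ℝ (Fin n) → ℝ → ℝ,
          IsSolution n p T φ u ∧
          (⨆ t : Set.Ioo (0 : ℝ) T,
            zygNormUL n 1 ((n : ℝ) / 2) (T ^ ((1 : ℝ) / 2)) (fun x => u x t.1)) < ⊤ ∧
          (⨆ t : Set.Ioo (0 : ℝ) T,
            ENNReal.ofReal (t.1 ^ ((n : ℝ) / 2) * logFac t.1 ^ ((n : ℝ) / 2)) *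
              eLpNorm (fun x => u x t.1) ⊤ volume) < ⊤ ∧
          ∀ η : EuclideanSpace ℝ (Fin n) → ℝ, Continuous η → HasCompactSupport η →
            Filter.Tendsto (fun t => ∫ x, u x t * η x)
              (nhdsWithin 0 (Set.Ioi 0)) (nhds (∫ x, φ x * η x)) := by
  have hp0 : 0 ≤ (2 / n : ℝ) := by positivity
  have hp1 : 1 ≤ p := hp ▸ le_add_of_nonneg_right hp0
  have hp_pos : 0 < p := one_pos.trans_le hp1
  obtain ⟨ε, hε, h_small⟩ := exists_isDuhamelSupersolution hn hTstar
  rw [← hp] at h_small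
  refine ⟨ε, hε, fun φ₀ hφ₀ T hT hTS h_norm ↦ ?_⟩
  rw [← Real.sqrt_eq_rpow] at h_norm ⊢
  obtain ⟨φ, hφ, hφφ₀⟩ := hφ₀.aestronglyMeasurable.aemeasurable
  have h : IsZygmundBounded volume (n / 2) √T ε (fun x ↦ ‖φ x‖ₑ) :=
    (IsZygmundBounded.of_zygNormUL_le (by positivity) hε.le h_norm).congr_ae
      (hφφ₀.mono fun x hx ↦ by simp only [hx])
  obtain ⟨U, hU, h_super, ⟨K, hK⟩, ⟨K', hK'⟩, h_pot⟩ := h_small hφ hT hTS h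
  have hU_fin : ∀ t ∈ Ioo 0 T, ∀ x, U t x ≠ ∞ := fun t ht x ↦
    ((hK' t (Ioo_subset_Ioc_self ht) x).trans_lt ENNReal.ofReal_lt_top).ne
  obtain ⟨u, hu⟩ := h_super.exists_isDominatedSolution hU hp1 hU_fin hφ
  refine ⟨u, (hu.isSolution hp_pos h_super hU hU_fin hφ).congr_ae hφφ₀.symm,
    hu.iSup_zygNormUL_lt_top hK, hu.iSup_mul_eLpNorm_top_lt_top hK', fun η hηc hη ↦ ?_⟩
  rw [integral_congr_ae (hφφ₀.mono fun x hx ↦ by rw [hx])]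
  exact hu.tendsto_integral_mul hp_pos hU hT hφ (hφ₀.congr hφφ₀) h hηc hη
    (h_pot _ hη.isCompact)
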